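/- arXiv:1707.01528 — 3 statements merged into one kernel-verified Lean document; each statement's English description precedes it below -/
import Mathlib

section
/- Identity (c5) of Appendix C: Let τ lie in the complex upper half-plane and let x, y ∈ ℂ be such that all theta-function values appearing in denominators below are nonzero (equivalently, the relevant arguments avoid the zeros of the theta functions). Then S''(x,τ)·ζ₁(y−x, τ/2) − S''(x,τ)·ζ₁(y, τ/2) + S'(x,τ)·℘₁(x−y, τ/2) + 2 S''(x,τ)·ζ₂(x, τ) − 2 S'(x,τ)·℘₂(x, τ) + S'(y,τ)·S''(y−x, τ) = 0. -/
open Complex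

/-- Jacobi theta function θ₁(u,τ). -/
noncomputable def theta1 (u τ : ℂ) : ℂ :=
  -∑' k : ℤ, Complex.exp ((Real.pi : ℂ) * Complex.I * τ * ((k : ℂ) + 1/2)^2
      + 2 * (Real.pi : ℂ) * Complex.I * (u + 1/2) * ((k : ℂ) + 1/2))

/-- Jacobi theta function θ₂(u,τ). -/
noncomputable def theta2 (u τ : ℂ) : ℂ :=
  ∑' k : ℤ, Complex.exp ((Real.pi : ℂ) * Complex.I * τ * ((k : ℂ) + 1/2)^2
      + 2 * (Real.pi : ℂ) * Complex.I * u * ((k : ℂ) + 1/2))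

/-- Jacobi theta function θ₃(u,τ). -/
noncomputable def theta3 (u τ : ℂ) : ℂ :=
  ∑' k : ℤ, Complex.exp ((Real.pi : ℂ) * Complex.I * τ * (k : ℂ)^2
      + 2 * (Real.pi : ℂ) * Complex.I * u * (k : ℂ))

/-- Jacobi theta function θ₄(u,τ). -/
noncomputable def theta4 (u τ : ℂ) : ℂ :=
  ∑' k : ℤ, Complex.exp ((Real.pi : ℂ) * Complex.I * τ * (k : ℂ)^2
      + 2 * (Real.pi : ℂ) * Complex.I * (u + 1/2) * (k : ℂ))

/-- ζ_a(u,τ) = θ_a'(u,τ)/θ_a(u,τ). -/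
noncomputable def zeta1 (u τ : ℂ) : ℂ := deriv (fun v => theta1 v τ) u / theta1 u τ
noncomputable def zeta2 (u τ : ℂ) : ℂ := deriv (fun v => theta2 v τ) u / theta2 u τ
noncomputable def zeta3 (u τ : ℂ) : ℂ := deriv (fun v => theta3 v τ) u / theta3 u τ
noncomputable def zeta4 (u τ : ℂ) : ℂ := deriv (fun v => theta4 v τ) u / theta4 u τ

/-- ℘_a(u,τ) = −∂_u ζ_a(u,τ). -/
noncomputable def wp1 (u τ : ℂ) : ℂ := -deriv (fun v => zeta1 v τ) u
noncomputable def wp2 (u τ : ℂ) : ℂ := -deriv (fun v => zeta2 v τ) u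
noncomputable def wp1' (u τ : ℂ) : ℂ := deriv (fun v => wp1 v τ) u
noncomputable def wp2' (u τ : ℂ) : ℂ := deriv (fun v => wp2 v τ) u

/-- S'(u,τ) = ζ₁(u,τ) − ζ₄(u,τ). -/
noncomputable def Sp (u τ : ℂ) : ℂ := zeta1 u τ - zeta4 u τ
/-- S''(u,τ) = ∂_u S'(u,τ). -/
noncomputable def Spp (u τ : ℂ) : ℂ := deriv (fun v => Sp v τ) u
/-- S'''(u,τ) = ∂_u S''(u,τ). -/
noncomputable def Sppp (u τ : ℂ) : ℂ := deriv (fun v => Spp v τ) u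

/-- Partial derivative in the j-th coordinate of a ℂ-valued function on ℝ^N. -/
noncomputable def pdC {N : ℕ} (j : Fin N) (f : (Fin N → ℝ) → ℂ) (x : Fin N → ℝ) : ℂ :=
  fderiv ℝ f x (Pi.single j 1)

/-- Partial derivative in the j-th coordinate of an ℝ-valued function on ℝ^d. -/
noncomputable def pd {d : ℕ} (j : Fin d) (f : (Fin d → ℝ) → ℝ) (x : Fin d → ℝ) : ℝ :=
  fderiv ℝ f x (Pi.single j 1)


def sumDiffEquiv : (ℤ × ℤ) ⊕ (ℤ × ℤ) ≃ ℤ × ℤ where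
  toFun s := match s with
    | Sum.inl (a, b) => (a + b, a - b)
    | Sum.inr (a, b) => (a + b + 1, a - b)
  invFun p := if (p.1 + p.2) % 2 = 0 then Sum.inl ((p.1 + p.2) / 2, (p.1 - p.2) / 2)
    else Sum.inr ((p.1 + p.2 - 1) / 2, (p.1 - p.2 - 1) / 2)
  left_inv s := by
    rcases s with ⟨a, b⟩ | ⟨a, b⟩
    · have h : (a + b + (a - b)) % 2 = 0 := by omega
      simp only [h, if_true]
      congr 2 <;> omega
    · have h : ¬ (a + b + 1 + (a - b)) % 2 = 0 := by omega
      simp only [h, if_false]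
      congr 2 <;> omega
  right_inv p := by
    rcases p with ⟨k, l⟩
    by_cases h : (k + l) % 2 = 0
    · simp only [h, if_true]
      ext <;> simp <;> omega
    · simp only [h, if_false]
      ext <;> simp <;> omega

lemma jacobi_mul (x y τ : ℂ) (hτ : 0 < τ.im) :
    jacobiTheta₂ x τ * jacobiTheta₂ y τ =
      jacobiTheta₂ (x + y) (2 * τ) * jacobiTheta₂ (x - y) (2 * τ)
      + cexp (Real.pi * I * τ + 2 * Real.pi * I * x) *
        (jacobiTheta₂ (x + y + τ) (2 * τ) * jacobiTheta₂ (x - y + τ) (2 * τ)) := by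
  have hτ2 : 0 < (2 * τ).im := by simpa using hτ
  have hs : ∀ z (t : ℂ), 0 < t.im → Summable (fun n => ‖jacobiTheta₂_term n z t‖) :=
    fun z t ht => ((summable_jacobiTheta₂_term_iff z t).mpr ht).norm
  simp only [jacobiTheta₂]
  rw [tsum_mul_tsum_of_summable_norm (hs x τ hτ) (hs y τ hτ),
    tsum_mul_tsum_of_summable_norm (hs _ _ hτ2) (hs _ _ hτ2),
    tsum_mul_tsum_of_summable_norm (hs _ _ hτ2) (hs _ _ hτ2), ← tsum_mul_left]
  have hS := summable_mul_of_summable_norm (hs x τ hτ) (hs y τ hτ)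
  have e1 : ∀ p : ℤ × ℤ, jacobiTheta₂_term p.1 (x + y) (2 * τ) * jacobiTheta₂_term p.2 (x - y) (2 * τ)
      = (fun p : ℤ × ℤ => jacobiTheta₂_term p.1 x τ * jacobiTheta₂_term p.2 y τ)
        (sumDiffEquiv (Sum.inl p)) := by
    intro p
    simp only [sumDiffEquiv, jacobiTheta₂_term, Equiv.coe_fn_mk, ← Complex.exp_add]
    congr 1; push_cast; ring
  have e2 : ∀ p : ℤ × ℤ, cexp (Real.pi * I * τ + 2 * Real.pi * I * x) *
      (jacobiTheta₂_term p.1 (x + y + τ) (2 * τ) * jacobiTheta₂_term p.2 (x - y + τ) (2 * τ))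
      = (fun p : ℤ × ℤ => jacobiTheta₂_term p.1 x τ * jacobiTheta₂_term p.2 y τ)
        (sumDiffEquiv (Sum.inr p)) := by
    intro p
    simp only [sumDiffEquiv, jacobiTheta₂_term, Equiv.coe_fn_mk, ← Complex.exp_add]
    congr 1; push_cast; ring
  rw [tsum_congr e1, tsum_congr e2]
  generalize (fun p : ℤ × ℤ => jacobiTheta₂_term p.1 x τ * jacobiTheta₂_term p.2 y τ) = F at hS ⊢
  have hS' : Summable (F ∘ sumDiffEquiv) := sumDiffEquiv.summable_iff.mpr hS
  rw [← sumDiffEquiv.tsum_eq F]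
  exact Summable.tsum_sum (f := F ∘ sumDiffEquiv) (hS'.comp_injective Sum.inl_injective)
    (hS'.comp_injective Sum.inr_injective)

lemma theta3_eq (u τ : ℂ) : theta3 u τ = jacobiTheta₂ u τ := by
  refine tsum_congr fun n => ?_
  rw [jacobiTheta₂_term]; congr 1; ring

lemma theta2_eq (u τ : ℂ) :
    theta2 u τ = cexp (Real.pi * I * τ / 4 + Real.pi * I * u) * jacobiTheta₂ (u + τ / 2) τ := by
  rw [theta2, jacobiTheta₂, ← tsum_mul_left]
  refine tsum_congr fun n => ?_
  rw [jacobiTheta₂_term, ← Complex.exp_add]; congr 1; ring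

lemma theta1_eq (u τ : ℂ) : theta1 u τ = -theta2 (u + 1 / 2) τ := rfl

lemma theta4_eq (u τ : ℂ) : theta4 u τ = theta3 (u + 1 / 2) τ := rfl

lemma theta3_diff (τ : ℂ) (hτ : 0 < τ.im) : Differentiable ℂ (fun u => theta3 u τ) := by
  simp only [theta3_eq]
  exact fun u => differentiableAt_jacobiTheta₂_fst u hτ

lemma theta2_diff (τ : ℂ) (hτ : 0 < τ.im) : Differentiable ℂ (fun u => theta2 u τ) := by
  have h : Differentiable ℂ (fun u => jacobiTheta₂ u τ) :=
    fun u => differentiableAt_jacobiTheta₂_fst u hτ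
  simp only [theta2_eq]
  have h2 : Differentiable ℂ (fun u => jacobiTheta₂ (u + τ / 2) τ) :=
    h.comp (f := fun u => u + τ / 2) (by fun_prop)
  exact Differentiable.mul (by fun_prop) h2

lemma theta1_diff (τ : ℂ) (hτ : 0 < τ.im) : Differentiable ℂ (fun u => theta1 u τ) := by
  simp only [theta1_eq]
  exact ((theta2_diff τ hτ).comp (f := fun u => u + 1 / 2) (by fun_prop)).neg

lemma theta4_diff (τ : ℂ) (hτ : 0 < τ.im) : Differentiable ℂ (fun u => theta4 u τ) := by
  simp only [theta4_eq]
  exact (theta3_diff τ hτ).comp (f := fun u => u + 1 / 2) (by fun_prop)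

lemma theta3_neg (u τ : ℂ) : theta3 (-u) τ = theta3 u τ := by
  rw [theta3_eq, theta3_eq, jacobiTheta₂_neg_left]

lemma theta3_add_one (u τ : ℂ) : theta3 (u + 1) τ = theta3 u τ := by
  rw [theta3_eq, theta3_eq, jacobiTheta₂_add_left]

lemma theta2_add_one (u τ : ℂ) : theta2 (u + 1) τ = -theta2 u τ := by
  rw [theta2_eq, theta2_eq, show u + 1 + τ / 2 = u + τ / 2 + 1 by ring, jacobiTheta₂_add_left,
    show (Real.pi : ℂ) * I * τ / 4 + Real.pi * I * (u + 1) =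
      (Real.pi * I * τ / 4 + Real.pi * I * u) + Real.pi * I by ring, Complex.exp_add,
    Complex.exp_pi_mul_I]
  ring

lemma theta2_neg (u τ : ℂ) : theta2 (-u) τ = theta2 u τ := by
  rw [theta2_eq, theta2_eq, ← jacobiTheta₂_neg_left,
    show u + τ / 2 = -(-u + τ / 2) + τ by ring, jacobiTheta₂_add_left', ← mul_assoc,
    ← Complex.exp_add]
  congr 2; ring

lemma theta2_mul (a b τ : ℂ) (hτ : 0 < τ.im) :
    theta2 a (τ / 2) * theta2 b (τ / 2) =
      theta2 (a + b) τ * theta3 (a - b) τ + theta3 (a + b) τ * theta2 (a - b) τ := by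
  have hτ2 : 0 < (τ / 2).im := by
    rw [show τ / 2 = τ / (2 : ℕ) by norm_num, Complex.div_natCast_im]; positivity
  have h := jacobi_mul (a + τ / 2 / 2) (b + τ / 2 / 2) (τ / 2) hτ2
  rw [show a + τ / 2 / 2 + (b + τ / 2 / 2) + τ / 2 = (a + b) + τ by ring,
    show a + τ / 2 / 2 + (b + τ / 2 / 2) = a + b + τ / 2 by ring,
    show a + τ / 2 / 2 - (b + τ / 2 / 2) = a - b by ring,
    show 2 * (τ / 2) = τ by ring, jacobiTheta₂_add_left'] at h
  simp only [theta2_eq, theta3_eq]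
  rw [mul_mul_mul_comm, h, ← Complex.exp_add, mul_add]
  congr 1
  · rw [← mul_assoc]; congr 3; ring
  · rw [show ∀ A B C D E : ℂ, A * (B * (C * D * E)) = (A * B * C) * (D * E) by intros; ring,
      show ∀ A B C : ℂ, A * (B * C) = B * (A * C) by intros; ring,
      show ∀ A B C : ℂ, A * (B * C) = B * (A * C) by intros; ring,
      ← Complex.exp_add, ← Complex.exp_add,
      show ∀ A B C : ℂ, A * (B * C) = B * (A * C) by intros; ring]
    congr 2; ring

/-- differential consequences of the product formula -/
lemma core {h k q p : ℂ → ℂ} (dh : Differentiable ℂ h) (dk : Differentiable ℂ k)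
    (dq : Differentiable ℂ q) (dp : Differentiable ℂ p)
    (hp : ∀ u, p u = -q (u + 1 / 2))
    (hh : ∀ u, h (-u) = h u) (hq : ∀ u, q (-u) = q u)
    (hh1 : ∀ u, h (u + 1) = -h u) (hk1 : ∀ u, k (u + 1) = k u)
    (hq1 : ∀ u, q (u + 1) = -q u)
    (hk : ∀ u, k (-u) = k u)
    (R3 : ∀ a b, q a * q b = h (a + b) * k (a - b) + k (a + b) * h (a - b)) :
    p 0 = 0 ∧ deriv q 0 = 0 ∧
    (∀ a b, p a * p b = k (a + b) * h (a - b) - h (a + b) * k (a - b)) ∧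
    (∀ x, q 0 * q x = 2 * h x * k x) ∧
    (∀ x, deriv p 0 * p x = 2 * (deriv k x * h x - k x * deriv h x)) ∧
    (∀ x w, q 0 * (deriv q x * p w * p (x + w) + q x * deriv p w * p (x + w)
      - q x * p w * deriv p (x + w)) = deriv p 0 * q (x + w) * q w * p x) := by
  have p0 : p 0 = 0 := by
    have e1 := hq (-(1/2)); have e2 := hq1 (-(1/2))
    rw [hp]; norm_num at e1 e2 ⊢
    have : (2 : ℂ) * q (1 / 2) = 0 := by linear_combination e1 + e2
    norm_num at this; exact this
  have q0' : deriv q 0 = 0 := by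
    have e := deriv_comp_neg (f := q) (x := (0 : ℂ))
    simp only [hq, neg_zero] at e
    have : (2 : ℂ) * deriv q 0 = 0 := by linear_combination e
    simpa using this
  have R2 : ∀ a b, p a * p b = k (a + b) * h (a - b) - h (a + b) * k (a - b) := by
    intro a b
    have := R3 (a + 1 / 2) (b + 1 / 2)
    rw [show a + 1 / 2 + (b + 1 / 2) = a + b + 1 by ring,
      show a + 1 / 2 - (b + 1 / 2) = a - b by ring, hh1, hk1] at this
    rw [hp, hp]; linear_combination this
  refine ⟨p0, q0', R2, ?_, ?_, ?_⟩
  · intro x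
    have := R3 x 0
    simp only [add_zero, sub_zero] at this
    linear_combination this
  · intro x
    have D1 : HasDerivAt (fun b => p x * p b) (p x * deriv p 0) 0 :=
      (dp 0).hasDerivAt.const_mul _
    have ha : HasDerivAt (fun b : ℂ => x + b) 1 0 := (hasDerivAt_id _).const_add x
    have hs : HasDerivAt (fun b : ℂ => x - b) (-1) 0 := (hasDerivAt_id _).const_sub x
    have ka : HasDerivAt (fun b : ℂ => k (x + b)) (deriv k (x + 0) * 1) 0 :=
      (dk (x + 0)).hasDerivAt.comp (0 : ℂ) ha
    have hha : HasDerivAt (fun b : ℂ => h (x + b)) (deriv h (x + 0) * 1) 0 :=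
      (dh (x + 0)).hasDerivAt.comp (0 : ℂ) ha
    have ks : HasDerivAt (fun b : ℂ => k (x - b)) (deriv k (x - 0) * (-1)) 0 :=
      (dk (x - 0)).hasDerivAt.comp (0 : ℂ) hs
    have hhs : HasDerivAt (fun b : ℂ => h (x - b)) (deriv h (x - 0) * (-1)) 0 :=
      (dh (x - 0)).hasDerivAt.comp (0 : ℂ) hs
    have D2 := (ka.mul hhs).sub (hha.mul ks)
    have e := D1.unique (D2.congr_of_eventuallyEq (Filter.Eventually.of_forall fun b => R2 x b))
    simp only [add_zero, sub_zero] at e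
    linear_combination e
  · intro x w
    have T : ∀ ε, q (x + ε) * q ε * (p (w + ε) * p (x + w - ε)) =
        q (x + w + ε) * q (w - ε) * (p ε * p (x - ε))
        + q (ε + ε) * q x * (p (x + w) * p w) := by
      intro ε
      have a1 := R3 (x + ε) ε
      have a2 := R2 (x + w - ε) (w + ε)
      have a3 := R3 (x + w + ε) (w - ε)
      have a4 := R2 (x - ε) ε
      have a5 := R3 x (ε + ε)
      have a6 := R2 (x + w) w
      rw [show x + ε + ε = x + (ε + ε) by ring, show x + ε - ε = x by ring] at a1
      rw [show x + w - ε + (w + ε) = x + w + w by ring,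
        show x + w - ε - (w + ε) = x - (ε + ε) by ring] at a2
      rw [show x + w + ε + (w - ε) = x + w + w by ring,
        show x + w + ε - (w - ε) = x + (ε + ε) by ring] at a3
      rw [show x - ε + ε = x by ring, show x - ε - ε = x - (ε + ε) by ring] at a4
      rw [show x + w - w = x by ring] at a6
      rw [mul_comm (p (w + ε)), mul_comm (p ε), mul_comm (q (ε + ε)), a1, a2, a3, a4, a5, a6]
      ring
    have ha : ∀ c : ℂ, HasDerivAt (fun b : ℂ => c + b) 1 0 := fun c => (hasDerivAt_id _).const_add c
    have hs : ∀ c : ℂ, HasDerivAt (fun b : ℂ => c - b) (-1) 0 :=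
      fun c => (hasDerivAt_id _).const_sub c
    have plus : ∀ {r : ℂ → ℂ} (_ : Differentiable ℂ r) (c : ℂ),
        HasDerivAt (fun b : ℂ => r (c + b)) (deriv r (c + 0) * 1) 0 :=
      fun dr c => (dr (c + 0)).hasDerivAt.comp (0 : ℂ) (ha c)
    have minus : ∀ {r : ℂ → ℂ} (_ : Differentiable ℂ r) (c : ℂ),
        HasDerivAt (fun b : ℂ => r (c - b)) (deriv r (c - 0) * (-1)) 0 :=
      fun dr c => (dr (c - 0)).hasDerivAt.comp (0 : ℂ) (hs c)
    have dbl : HasDerivAt (fun b : ℂ => q (b + b)) (deriv q (0 + 0) * (1 + 1)) 0 :=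
      HasDerivAt.comp (h := fun b : ℂ => b + b) (0 : ℂ) (dq (0 + 0)).hasDerivAt ((hasDerivAt_id (0 : ℂ)).add (hasDerivAt_id (0 : ℂ)))
    have D1 := ((plus dq x).mul (dq 0).hasDerivAt).mul ((plus dp w).mul (minus dp (x + w)))
    have D2 := (((plus dq (x + w)).mul (minus dq w)).mul
      ((dp 0).hasDerivAt.mul (minus dp x))).add ((dbl.mul_const (q x)).mul_const (p (x + w) * p w))
    have e := D1.unique (D2.congr_of_eventuallyEq (Filter.Eventually.of_forall fun b => T b))
    simp only [Pi.mul_apply, add_zero, sub_zero, p0, q0'] at e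
    linear_combination e

/-- Identity (c5) of Appendix C. -/
theorem identity_c5 (τ x y : ℂ) (hτ : 0 < τ.im)
    (h1 : theta1 x τ ≠ 0) (h2 : theta4 x τ ≠ 0)
    (h3 : theta1 y τ ≠ 0) (h4 : theta4 y τ ≠ 0)
    (h5 : theta1 (y - x) τ ≠ 0) (h6 : theta4 (y - x) τ ≠ 0)
    (h7 : theta1 (y - x) (τ / 2) ≠ 0) (h8 : theta1 y (τ / 2) ≠ 0)
    (h9 : theta1 (x - y) (τ / 2) ≠ 0)
    (h10 : theta2 x τ ≠ 0) :
    Spp x τ * zeta1 (y - x) (τ / 2) - Spp x τ * zeta1 y (τ / 2)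
      + Sp x τ * wp1 (x - y) (τ / 2)
      + 2 * Spp x τ * zeta2 x τ - 2 * Sp x τ * wp2 x τ
      + Sp y τ * Spp (y - x) τ = 0 := by
  have hτ2 : 0 < (τ / 2).im := by
    rw [show τ / 2 = τ / (2 : ℕ) by norm_num, Complex.div_natCast_im]; positivity
  have dh := theta2_diff τ hτ
  have dk := theta3_diff τ hτ
  have df := theta1_diff τ hτ
  have dg := theta4_diff τ hτ
  have dq := theta2_diff (τ / 2) hτ2
  have dp := theta1_diff (τ / 2) hτ2
  obtain ⟨p0, q0', R2, Q, W, K⟩ := core dh dk dq dp (fun u => theta1_eq u _)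
    (fun u => theta2_neg u _) (fun u => theta2_neg u _) (fun u => theta2_add_one u _)
    (fun u => theta3_add_one u _) (fun u => theta2_add_one u _) (fun u => theta3_neg u _)
    (fun a b => theta2_mul a b τ hτ)
  -- translate by one half
  have P : ∀ u, theta2 0 (τ / 2) * theta1 u (τ / 2) = 2 * theta1 u τ * theta4 u τ := by
    intro u
    have := Q (u + 1 / 2)
    rw [theta1_eq, theta1_eq, theta4_eq]
    linear_combination -this
  have q0 : theta2 0 (τ / 2) ≠ 0 := by
    intro h0
    have := P x
    rw [h0, zero_mul] at this
    exact mul_ne_zero (mul_ne_zero two_ne_zero h1) h2 this.symm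
  have df' : ∀ u, deriv (fun v => theta1 v τ) u = -deriv (fun v => theta2 v τ) (u + 1 / 2) := by
    intro u
    simp only [theta1_eq]
    rw [deriv.fun_neg, deriv_comp_add_const (f := fun v => theta2 v τ)]
  have dg' : ∀ u, deriv (fun v => theta4 v τ) u = deriv (fun v => theta3 v τ) (u + 1 / 2) := by
    intro u
    simp only [theta4_eq]
    rw [deriv_comp_add_const (f := fun v => theta3 v τ)]
  set c := deriv (fun v => theta1 v (τ / 2)) 0 with hc
  -- Wronskian of theta1, theta4
  have V : ∀ u, c * theta2 u (τ / 2) =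
      2 * (deriv (fun v => theta1 v τ) u * theta4 u τ
        - theta1 u τ * deriv (fun v => theta4 v τ) u) := by
    intro u
    have := W (u + 1 / 2)
    rw [df', dg', theta1_eq u τ, theta4_eq]
    have e : theta1 (u + 1 / 2) (τ / 2) = theta2 u (τ / 2) := by
      rw [theta1_eq, show u + 1 / 2 + 1 / 2 = u + 1 by ring, theta2_add_one, neg_neg]
    rw [e] at this
    linear_combination this
  have pne : ∀ u, theta1 u τ ≠ 0 → theta4 u τ ≠ 0 → theta1 u (τ / 2) ≠ 0 := by
    intro u a b h0
    have := P u
    rw [h0, mul_zero] at this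
    exact mul_ne_zero (mul_ne_zero two_ne_zero a) b this.symm
  have S : ∀ u, theta1 u τ ≠ 0 → theta4 u τ ≠ 0 →
      Sp u τ = c / theta2 0 (τ / 2) * (theta2 u (τ / 2) / theta1 u (τ / 2)) := by
    intro u a b
    have hp := pne u a b
    have e1 := V u
    have e2 := P u
    rw [Sp, zeta1, zeta4, div_sub_div _ _ a b, div_mul_div_comm, e1, e2]
    field_simp
  have Q' : ∀ u, theta2 0 (τ / 2) * deriv (fun v => theta2 v (τ / 2)) u =
      2 * (deriv (fun v => theta2 v τ) u * theta3 u τ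
        + theta2 u τ * deriv (fun v => theta3 v τ) u) := by
    intro u
    have D1 := (dq u).hasDerivAt.const_mul (theta2 0 (τ / 2))
    have D2 := ((dh u).hasDerivAt.const_mul 2).mul (dk u).hasDerivAt
    have e := D1.unique (D2.congr_of_eventuallyEq (Filter.Eventually.of_forall fun b => Q b))
    linear_combination e
  -- the constancy statement
  have F : ∀ u, theta1 u τ ≠ 0 → theta4 u τ ≠ 0 → theta2 u τ ≠ 0 → theta1 (y - u) τ ≠ 0 →
      theta4 (y - u) τ ≠ 0 →
      Sp u τ * (zeta1 (y - u) (τ / 2) - zeta1 y (τ / 2) + 2 * zeta2 u τ)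
        - Sp y τ * Sp (y - u) τ = -(c / theta2 0 (τ / 2)) ^ 2 := by
    intro u a b d e f
    have k1 := K u (y - u)
    rw [show u + (y - u) = y by ring] at k1
    have hpu := pne u a b
    have hpw := pne _ e f
    have w1 := W u
    have q1 := Q u
    have q2 := Q' u
    have key : 2 * theta2 u (τ / 2) * deriv (fun v => theta2 v τ) u
        - deriv (fun v => theta2 v (τ / 2)) u * theta2 u τ
        = -(c / theta2 0 (τ / 2)) * (theta1 u (τ / 2) * theta2 u τ) := by
      field_simp
      linear_combination 2 * deriv (fun v => theta2 v τ) u * q1 - theta2 u τ * q2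
        + theta2 u τ * w1
    rw [S u a b, S y h3 h4, S _ e f, zeta1, zeta1, zeta2]
    generalize deriv (fun v => theta2 v τ) u = h' at *
    generalize deriv (fun v => theta2 v (τ / 2)) u = qu' at *
    generalize deriv (fun v => theta1 v (τ / 2)) (y - u) = pw' at *
    generalize deriv (fun v => theta1 v (τ / 2)) y = py' at *
    generalize theta2 u τ = h at *
    generalize theta1 u (τ / 2) = pu at *
    generalize theta1 (y - u) (τ / 2) = pw at *
    generalize theta1 y (τ / 2) = py at *
    generalize theta2 0 (τ / 2) = qz at *
    generalize theta2 u (τ / 2) = qu at *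
    generalize theta2 y (τ / 2) = qy at *
    generalize theta2 (y - u) (τ / 2) = qw at *
    clear_value c
    have e1 : 2 * (h' / h) * (qu / pu) = qu' / pu - c / qz := by
      field_simp at key ⊢
      linear_combination key
    have e2 : qu / pu * (pw' / pw - py' / py) + qu' / pu = c / qz * (qy / py * (qw / pw)) := by
      field_simp at k1 ⊢
      linear_combination k1
    linear_combination c / qz * e1 + c / qz * e2
  -- differentiability of the log derivatives
  have z1 : ∀ u, theta1 u (τ / 2) ≠ 0 → DifferentiableAt ℂ (fun v => zeta1 v (τ / 2)) u :=
    fun u a => (dp.deriv u).div (dp u) a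
  have z2 : DifferentiableAt ℂ (fun v => zeta2 v τ) x := (dh.deriv x).div (dh x) h10
  have sd : ∀ u, theta1 u τ ≠ 0 → theta4 u τ ≠ 0 → DifferentiableAt ℂ (fun v => Sp v τ) u :=
    fun u a b => ((df.deriv u).div (df u) a).sub ((dg.deriv u).div (dg u) b)
  have hs : HasDerivAt (fun b : ℂ => y - b) (-1) x := (hasDerivAt_id _).const_sub y
  have D1 : HasDerivAt (fun u => zeta1 (y - u) (τ / 2))
      (deriv (fun v => zeta1 v (τ / 2)) (y - x) * (-1)) x :=
    (z1 _ h7).hasDerivAt.comp x hs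
  have D2 : HasDerivAt (fun u => Sp (y - u) τ) (Spp (y - x) τ * (-1)) x :=
    (sd _ h5 h6).hasDerivAt.comp x hs
  have D3 : HasDerivAt (fun u => Sp u τ) (Spp x τ) x := (sd _ h1 h2).hasDerivAt
  have D4 : HasDerivAt (fun u => zeta2 u τ) (deriv (fun v => zeta2 v τ) x) x := z2.hasDerivAt
  have D := (D3.mul ((D1.sub_const (zeta1 y (τ / 2))).add (D4.const_mul 2))).sub
    (D2.const_mul (Sp y τ))
  have ev : ∀ᶠ u in nhds x, Sp u τ * (zeta1 (y - u) (τ / 2) - zeta1 y (τ / 2) + 2 * zeta2 u τ)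
        - Sp y τ * Sp (y - u) τ = -(c / theta2 0 (τ / 2)) ^ 2 := by
    have cs : ContinuousAt (fun b : ℂ => y - b) x := hs.continuousAt
    filter_upwards [(df x).continuousAt.eventually_ne h1, (dg x).continuousAt.eventually_ne h2,
      (dh x).continuousAt.eventually_ne h10,
      (ContinuousAt.comp (f := fun b : ℂ => y - b) (df (y - x)).continuousAt cs).eventually_ne h5,
      (ContinuousAt.comp (f := fun b : ℂ => y - b) (dg (y - x)).continuousAt cs).eventually_ne h6]
      with u a1 a2 a3 a4 a5
    exact F u a1 a2 a3 a4 a5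
  have e := D.unique ((hasDerivAt_const x (-(c / theta2 0 (τ / 2)) ^ 2)).congr_of_eventuallyEq ev)
  -- parity of wp1
  have podd : ∀ u, theta1 (-u) (τ / 2) = -theta1 u (τ / 2) := by
    intro u
    rw [theta1_eq, theta1_eq, ← theta2_neg]
    rw [show u + 1 / 2 = (u - 1 / 2) + 1 by ring, theta2_add_one]
    rw [show -(-u + 1 / 2) = u - 1 / 2 by ring, neg_neg]
  have zodd : ∀ u, zeta1 (-u) (τ / 2) = -zeta1 u (τ / 2) := by
    intro u
    have h := deriv_comp_neg (f := fun v => theta1 v (τ / 2)) (x := u)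
    simp only [podd] at h
    rw [deriv.fun_neg] at h
    rw [zeta1, zeta1, podd, neg_inj.mp h.symm, div_neg]
  have wev : wp1 (x - y) (τ / 2) = -deriv (fun v => zeta1 v (τ / 2)) (y - x) := by
    have h := deriv_comp_neg (f := fun v => zeta1 v (τ / 2)) (x := y - x)
    simp only [zodd] at h
    rw [deriv.fun_neg, neg_sub] at h
    rw [wp1, neg_inj.mp h.symm]
  rw [wev, wp2]
  simp only [Pi.add_apply] at e
  linear_combination e
end

section
/- Vanishing of f (Appendix E): Let τ lie in the complex upper half-plane, write σ = τ/2, and let u, x, y ∈ ℂ be such that all theta-function values appearing in denominators below are nonzero. Then 2 S'(y,τ)·S'(u+y,τ)·℘₁(x−y,σ) + S'(y,τ)·S''(u+y,τ)·[−ζ₁(u+x,σ) + ζ₁(x−y,σ) + ζ₂(u+y,σ)] − S'(y,τ)·S'(u+y,τ)·℘₂(u+y,σ) + S''(y,τ)·S'(u+y,τ)·[−ζ₁(x,σ) + ζ₁(x−y,σ) + ζ₂(y,σ)] − S'(y,τ)·S'(u+y,τ)·℘₂(y,σ) + S''(x−y,τ)·[S'(x,τ)·S'(u+y,τ) + S'(y,τ)·S'(u+x,τ)]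 = 0. (With x = ξ_i, y = ξ_j, this identity proves that S(u(z)) satisfies the conserved-density equation ∂²S(u)/∂λ_i∂λ_j = Γ_{ij} ∂S(u)/∂λ_i + Γ_{ji} ∂S(u)/∂λ_j along solutions of the elliptic Löwner and Gibbons–Tsarev systems.) -/
open Complex

namespace AppE

noncomputable def t2 (u τ : ℂ) (k : ℤ) : ℂ :=
  Complex.exp ((Real.pi : ℂ) * Complex.I * τ * ((k : ℂ) + 1/2)^2
      + 2 * (Real.pi : ℂ) * Complex.I * u * ((k : ℂ) + 1/2))

noncomputable def t3 (u τ : ℂ) (k : ℤ) : ℂ :=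
  Complex.exp ((Real.pi : ℂ) * Complex.I * τ * (k : ℂ)^2
      + 2 * (Real.pi : ℂ) * Complex.I * u * (k : ℂ))

lemma t3_eq (u τ : ℂ) (k : ℤ) : t3 u τ k = jacobiTheta₂_term k u τ := by
  unfold t3 jacobiTheta₂_term
  congr 1; ring

lemma t2_eq (u τ : ℂ) (k : ℤ) : t2 u τ k =
    Complex.exp ((Real.pi : ℂ) * Complex.I * (τ / 4 + u)) * jacobiTheta₂_term k (u + τ / 2) τ := by
  unfold t2 jacobiTheta₂_term
  rw [← Complex.exp_add]
  congr 1; ring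

lemma summable_t3 (u : ℂ) {τ : ℂ} (hτ : 0 < τ.im) : Summable (t3 u τ) := by
  have h : t3 u τ = fun k => jacobiTheta₂_term k u τ := funext (t3_eq u τ)
  rw [h]
  exact (summable_jacobiTheta₂_term_iff u τ).2 hτ

lemma summable_t2 (u : ℂ) {τ : ℂ} (hτ : 0 < τ.im) : Summable (t2 u τ) := by
  have h : t2 u τ = fun k => _ * jacobiTheta₂_term k (u + τ / 2) τ := funext (t2_eq u τ)
  rw [h]
  exact ((summable_jacobiTheta₂_term_iff _ τ).2 hτ).mul_left _

lemma theta3_eq (u τ : ℂ) : theta3 u τ = jacobiTheta₂ u τ := by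
  unfold theta3 jacobiTheta₂
  exact tsum_congr (t3_eq u τ)

lemma theta2_eq (u τ : ℂ) : theta2 u τ =
    Complex.exp ((Real.pi : ℂ) * Complex.I * (τ / 4 + u)) * jacobiTheta₂ (u + τ / 2) τ := by
  unfold theta2 jacobiTheta₂
  rw [← tsum_mul_left]
  exact tsum_congr (t2_eq u τ)

lemma theta1_eq (u τ : ℂ) : theta1 u τ = - theta2 (u + 1/2) τ := rfl

lemma theta4_eq (u τ : ℂ) : theta4 u τ = theta3 (u + 1/2) τ := rfl

lemma theta3_add_one (u τ : ℂ) : theta3 (u + 1) τ = theta3 u τ := by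
  rw [theta3_eq, theta3_eq, jacobiTheta₂_add_left]

lemma theta2_add_one (u τ : ℂ) : theta2 (u + 1) τ = - theta2 u τ := by
  rw [theta2_eq, theta2_eq, show u + 1 + τ / 2 = (u + τ / 2) + 1 by ring, jacobiTheta₂_add_left,
    show (Real.pi : ℂ) * Complex.I * (τ / 4 + (u + 1))
      = (Real.pi : ℂ) * Complex.I * (τ / 4 + u) + Real.pi * Complex.I by ring,
    Complex.exp_add, Complex.exp_pi_mul_I]
  ring

lemma theta3_neg (u τ : ℂ) : theta3 (-u) τ = theta3 u τ := by
  rw [theta3_eq, theta3_eq, jacobiTheta₂_neg_left]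

lemma theta2_neg (u τ : ℂ) : theta2 (-u) τ = theta2 u τ := by
  let e : ℤ ≃ ℤ := ⟨fun k => -k - 1, fun k => -k - 1, fun k => by ring, fun k => by ring⟩
  show ∑' k, t2 (-u) τ k = ∑' k, t2 u τ k
  rw [← e.tsum_eq]
  refine tsum_congr fun k => ?_
  simp only [t2, e, Equiv.coe_fn_mk]
  congr 1
  push_cast
  ring

lemma theta1_neg (u τ : ℂ) : theta1 (-u) τ = - theta1 u τ := by
  rw [theta1_eq, theta1_eq, ← theta2_neg (-u + 1/2), ← theta2_add_one]
  ring_nf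

lemma theta4_neg (u τ : ℂ) : theta4 (-u) τ = theta4 u τ := by
  rw [theta4_eq, theta4_eq, ← theta3_neg (-u + 1/2), ← theta3_add_one]
  congr 1; ring

lemma theta1_zero (τ : ℂ) : theta1 0 τ = 0 := by
  have h := theta1_neg 0 τ
  rw [neg_zero] at h
  linear_combination h / 2

lemma P22 (a b : ℂ) {τ : ℂ} (hτ : 0 < τ.im) :
    theta2 a (τ / 2) * theta2 b (τ / 2)
      = theta3 (a + b) τ * theta2 (a - b) τ + theta2 (a + b) τ * theta3 (a - b) τ := by
  have hσ : 0 < (τ / 2).im := by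
    rw [show τ / 2 = τ / ((2 : ℝ) : ℂ) by norm_num, Complex.div_ofReal_im]; positivity
  have prod : ∀ f g : ℤ → ℂ, Summable f → Summable g →
      HasSum (fun p : ℤ × ℤ => f p.1 * g p.2) ((∑' k, f k) * ∑' k, g k) := by
    intro f g hf hg
    rw [tsum_mul_tsum_of_summable_norm hf.norm hg.norm]
    exact (summable_mul_of_summable_norm hf.norm hg.norm).hasSum
  have h0 := prod _ _ (summable_t2 a hσ) (summable_t2 b hσ)
  have h1 := prod _ _ (summable_t3 (a + b) hτ) (summable_t2 (a - b) hτ)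
  have h2 := prod _ _ (summable_t2 (a + b) hτ) (summable_t3 (a - b) hτ)
  let e1 : ℤ × ℤ → ℤ × ℤ := fun p => (p.1 + p.2, p.1 - p.2 - 1)
  let e2 : ℤ × ℤ → ℤ × ℤ := fun p => (p.1 + p.2, p.1 - p.2)
  have i1 : Function.Injective e1 := by
    rintro ⟨p, q⟩ ⟨r, s⟩ h
    simp only [e1, Prod.mk.injEq] at h ⊢
    omega
  have i2 : Function.Injective e2 := by
    rintro ⟨p, q⟩ ⟨r, s⟩ h
    simp only [e2, Prod.mk.injEq] at h ⊢
    omega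
  have hc : IsCompl (Set.range e1) (Set.range e2) := by
    constructor
    · rw [Set.disjoint_left]
      rintro _ ⟨⟨p, q⟩, rfl⟩ ⟨⟨r, s⟩, h⟩
      simp only [e1, e2, Prod.mk.injEq] at h
      omega
    · rw [codisjoint_iff_le_sup]
      rintro ⟨k, l⟩ -
      rcases Int.even_or_odd' (k + l) with ⟨m, hm | hm⟩
      · refine Or.inr ⟨(m, k - m), ?_⟩
        simp only [e2, Prod.mk.injEq]; omega
      · refine Or.inl ⟨(m + 1, k - m - 1), ?_⟩
        simp only [e1, Prod.mk.injEq]; omega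
  have k1 : (fun p : ℤ × ℤ => t3 (a + b) τ p.1 * t2 (a - b) τ p.2)
      = (fun p : ℤ × ℤ => t2 a (τ / 2) p.1 * t2 b (τ / 2) p.2) ∘ e1 := by
    funext p
    simp only [Function.comp, e1, t2, t3, ← Complex.exp_add]
    congr 1; push_cast; ring
  have k2 : (fun p : ℤ × ℤ => t2 (a + b) τ p.1 * t3 (a - b) τ p.2)
      = (fun p : ℤ × ℤ => t2 a (τ / 2) p.1 * t2 b (τ / 2) p.2) ∘ e2 := by
    funext p
    simp only [Function.comp, e2, t2, t3, ← Complex.exp_add]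
    congr 1; push_cast; ring
  rw [k1] at h1
  rw [k2] at h2
  exact h0.unique ((i1.hasSum_range_iff.2 h1).add_isCompl hc (i2.hasSum_range_iff.2 h2))

lemma P11 (a b : ℂ) {τ : ℂ} (hτ : 0 < τ.im) :
    theta1 a (τ / 2) * theta1 b (τ / 2)
      = theta3 (a + b) τ * theta2 (a - b) τ - theta2 (a + b) τ * theta3 (a - b) τ := by
  have h := P22 (a + 1/2) (b + 1/2) hτ
  rw [show a + 1/2 + (b + 1/2) = a + b + 1 by ring, show a + 1/2 - (b + 1/2) = a - b by ring,
    theta3_add_one, theta2_add_one] at h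
  rw [theta1_eq, theta1_eq]
  linear_combination h

lemma P12 (a b : ℂ) {τ : ℂ} (hτ : 0 < τ.im) :
    theta1 a (τ / 2) * theta2 b (τ / 2)
      = theta1 (a + b) τ * theta4 (a - b) τ + theta4 (a + b) τ * theta1 (a - b) τ := by
  have h := P22 (a + 1/2) b hτ
  rw [show a + 1/2 + b = a + b + 1/2 by ring, show a + 1/2 - b = a - b + 1/2 by ring] at h
  simp only [theta1_eq, theta4_eq]
  linear_combination -h

noncomputable def d1 (u τ : ℂ) : ℂ := deriv (fun v => theta1 v τ) u
noncomputable def d2 (u τ : ℂ) : ℂ := deriv (fun v => theta2 v τ) u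
noncomputable def d3 (u τ : ℂ) : ℂ := deriv (fun v => theta3 v τ) u
noncomputable def d4 (u τ : ℂ) : ℂ := deriv (fun v => theta4 v τ) u

lemma diff3 {τ : ℂ} (hτ : 0 < τ.im) : Differentiable ℂ (fun v => theta3 v τ) := by
  intro u
  simp only [theta3_eq]
  exact differentiableAt_jacobiTheta₂_fst u hτ

lemma diff2 {τ : ℂ} (hτ : 0 < τ.im) : Differentiable ℂ (fun v => theta2 v τ) := by
  have h : Differentiable ℂ (fun v => jacobiTheta₂ v τ) :=
    fun u => differentiableAt_jacobiTheta₂_fst u hτ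
  simp only [theta2_eq]
  have h' : Differentiable ℂ (fun v => jacobiTheta₂ (v + τ / 2) τ) :=
    h.comp (differentiable_id.add_const (τ / 2))
  exact Differentiable.mul (by fun_prop) h'

lemma diff1 {τ : ℂ} (hτ : 0 < τ.im) : Differentiable ℂ (fun v => theta1 v τ) :=
  ((diff2 hτ).comp (differentiable_id.add_const (1/2))).neg

lemma diff4 {τ : ℂ} (hτ : 0 < τ.im) : Differentiable ℂ (fun v => theta4 v τ) :=
  (diff3 hτ).comp (differentiable_id.add_const (1/2))

lemma diffd {f : ℂ → ℂ} (hf : Differentiable ℂ f) : Differentiable ℂ (deriv f) := by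
  have h : ContDiff ℂ 2 f := hf.contDiff
  exact (h.iterate_deriv' 1 1).differentiable (by norm_num)

/-- derivative at zero of `ε ↦ f (u + c ε)`. -/
lemma hd {f : ℂ → ℂ} (hf : Differentiable ℂ f) (u c : ℂ) :
    HasDerivAt (fun e : ℂ => f (u + c * e)) (deriv f u * c) 0 := by
  have h1 : HasDerivAt (fun e : ℂ => u + c * e) c 0 := by
    simpa using ((hasDerivAt_id (0 : ℂ)).const_mul c).const_add u
  have h2 : HasDerivAt f (deriv f u) (u + c * 0) := by
    simpa using (hf u).hasDerivAt
  exact h2.comp 0 h1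

lemma deriv_odd {f : ℂ → ℂ} (hf : ∀ u, f (-u) = - f u) (u : ℂ) : deriv f (-u) = deriv f u := by
  have h := deriv_comp_neg f u
  have h' : (fun x => f (-x)) = fun x => - f x := funext hf
  rw [h', deriv.fun_neg] at h
  linear_combination h

lemma deriv_even {f : ℂ → ℂ} (hf : ∀ u, f (-u) = f u) (u : ℂ) : deriv f (-u) = - deriv f u := by
  have h := deriv_comp_neg f u
  have h' : (fun x => f (-x)) = fun x => f x := funext hf
  rw [h'] at h
  linear_combination h

lemma d1_neg (u τ : ℂ) : d1 (-u) τ = d1 u τ := deriv_odd (fun u => theta1_neg u τ) u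
lemma d2_neg (u τ : ℂ) : d2 (-u) τ = - d2 u τ := deriv_even (fun u => theta2_neg u τ) u
lemma d3_neg (u τ : ℂ) : d3 (-u) τ = - d3 u τ := deriv_even (fun u => theta3_neg u τ) u
lemma d4_neg (u τ : ℂ) : d4 (-u) τ = - d4 u τ := deriv_even (fun u => theta4_neg u τ) u

lemma half_im {τ : ℂ} (hτ : 0 < τ.im) : 0 < (τ / 2).im := by
  rw [show τ / 2 = τ / ((2 : ℝ) : ℂ) by norm_num, Complex.div_ofReal_im]; positivity

lemma L1 (u : ℂ) {τ : ℂ} (hτ : 0 < τ.im) :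
    2 * (theta1 u τ * theta4 u τ) = theta1 u (τ / 2) * theta2 0 (τ / 2) := by
  rw [P12 u 0 hτ, add_zero, sub_zero]; ring

lemma L2 (u : ℂ) {τ : ℂ} (hτ : 0 < τ.im) :
    d1 0 (τ / 2) * theta2 u (τ / 2) = 2 * (d1 u τ * theta4 u τ - theta1 u τ * d4 u τ) := by
  have hl := (hd (diff1 (half_im hτ)) 0 1).mul_const (theta2 u (τ / 2))
  have hr := ((hd (diff1 hτ) u 1).mul (hd (diff4 hτ) (-u) 1)).add
    ((hd (diff4 hτ) u 1).mul (hd (diff1 hτ) (-u) 1))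
  have he : (fun e : ℂ => theta1 (0 + 1 * e) (τ / 2) * theta2 u (τ / 2)) =
      fun e => theta1 (u + 1 * e) τ * theta4 (-u + 1 * e) τ
        + theta4 (u + 1 * e) τ * theta1 (-u + 1 * e) τ := by
    funext e
    rw [P12 _ _ hτ]
    ring_nf
  have h := (he ▸ hl).unique hr
  simp only [mul_one, mul_zero, add_zero] at h
  change d1 0 (τ / 2) * _ = d1 u τ * _ + _ * d4 (-u) τ + (d4 u τ * _ + _ * d1 (-u) τ) at h
  rw [d1_neg, d4_neg, theta1_neg, theta4_neg] at h
  linear_combination h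

lemma L3 (s : ℂ) {τ : ℂ} (hτ : 0 < τ.im) :
    d1 0 (τ / 2) * theta1 s (τ / 2) = 2 * (d3 s τ * theta2 s τ - theta3 s τ * d2 s τ) := by
  have hl := (hd (diff1 (half_im hτ)) 0 1).mul_const (theta1 s (τ / 2))
  have hr := ((hd (diff3 hτ) s 1).mul (hd (diff2 hτ) (-s) 1)).sub
    ((hd (diff2 hτ) s 1).mul (hd (diff3 hτ) (-s) 1))
  have he : (fun e : ℂ => theta1 (0 + 1 * e) (τ / 2) * theta1 s (τ / 2)) =
      fun e => theta3 (s + 1 * e) τ * theta2 (-s + 1 * e) τ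
        - theta2 (s + 1 * e) τ * theta3 (-s + 1 * e) τ := by
    funext e
    rw [P11 _ _ hτ]
    ring_nf
  have h := (he ▸ hl).unique hr
  simp only [mul_one, mul_zero, add_zero] at h
  change d1 0 (τ / 2) * _ = d3 s τ * _ + _ * d2 (-s) τ - (d2 s τ * _ + _ * d3 (-s) τ) at h
  rw [d2_neg, d3_neg, theta2_neg, theta3_neg] at h
  linear_combination h

lemma L4 (z w : ℂ) {τ : ℂ} (hτ : 0 < τ.im) :
    d1 z (τ / 2) * theta1 w (τ / 2) + theta1 z (τ / 2) * d1 w (τ / 2)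
      = 2 * (d3 (z + w) τ * theta2 (z - w) τ - d2 (z + w) τ * theta3 (z - w) τ) := by
  have hl := (hd (diff1 (half_im hτ)) z 1).mul (hd (diff1 (half_im hτ)) w 1)
  have hr := ((hd (diff3 hτ) (z + w) 2).mul_const (theta2 (z - w) τ)).sub
    ((hd (diff2 hτ) (z + w) 2).mul_const (theta3 (z - w) τ))
  have he : (fun e : ℂ => theta1 (z + 1 * e) (τ / 2) * theta1 (w + 1 * e) (τ / 2)) =
      fun e => theta3 (z + w + 2 * e) τ * theta2 (z - w) τ
        - theta2 (z + w + 2 * e) τ * theta3 (z - w) τ := by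
    funext e
    rw [P11 _ _ hτ]
    ring_nf
  have hl' : HasDerivAt (fun e : ℂ => theta1 (z + 1 * e) (τ / 2) * theta1 (w + 1 * e) (τ / 2))
    _ 0 := hl
  have h := (he ▸ hl').unique hr
  simp only [mul_one, mul_zero, add_zero] at h
  change d1 z (τ / 2) * _ + _ * d1 w (τ / 2) = d3 (z + w) τ * 2 * _ - d2 (z + w) τ * 2 * _ at h
  linear_combination h

lemma L5 (s : ℂ) {τ : ℂ} (hτ : 0 < τ.im) :
    theta2 s (τ / 2) * theta2 0 (τ / 2) = 2 * (theta3 s τ * theta2 s τ) := by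
  rw [P22 s 0 hτ, add_zero, sub_zero]; ring

lemma L6 (s : ℂ) {τ : ℂ} (hτ : 0 < τ.im) :
    d2 s (τ / 2) * theta2 0 (τ / 2) = 2 * (d3 s τ * theta2 s τ + theta3 s τ * d2 s τ) := by
  have hl := (hd (diff2 (half_im hτ)) s 1).mul_const (theta2 0 (τ / 2))
  have hr := ((hd (diff3 hτ) s 1).mul (hd (diff2 hτ) s 1)).const_mul 2
  have he : (fun e : ℂ => theta2 (s + 1 * e) (τ / 2) * theta2 0 (τ / 2)) =
      fun e => 2 * (theta3 (s + 1 * e) τ * theta2 (s + 1 * e) τ) := by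
    funext e
    rw [L5 _ hτ]
  have h := (he ▸ hl).unique hr
  simp only [mul_one, mul_zero, add_zero] at h
  exact h

/-- Degenerate Fay identity in theta form. -/
lemma L7 (z w : ℂ) {τ : ℂ} (hτ : 0 < τ.im) :
    d1 0 (τ / 2) * theta1 (z + w) (τ / 2) * (theta2 z (τ / 2) * theta2 w (τ / 2))
      = theta2 0 (τ / 2) *
        ((d1 z (τ / 2) * theta1 w (τ / 2) + theta1 z (τ / 2) * d1 w (τ / 2))
            * theta2 (z + w) (τ / 2)
          - theta1 z (τ / 2) * theta1 w (τ / 2) * d2 (z + w) (τ / 2)) := by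
  have h5 := L5 (z + w) hτ
  have h6 := L6 (z + w) hτ
  rw [L3 _ hτ, P22 z w hτ, L4 z w hτ, P11 z w hτ]
  linear_combination (-2 * (d3 (z + w) τ * theta2 (z - w) τ - d2 (z + w) τ * theta3 (z - w) τ)) * h5
    + (theta3 (z + w) τ * theta2 (z - w) τ - theta2 (z + w) τ * theta3 (z - w) τ) * h6

lemma Sp_eq (u : ℂ) {τ : ℂ} (hτ : 0 < τ.im) (h1 : theta1 u τ ≠ 0) (h4 : theta4 u τ ≠ 0) :
    Sp u τ = d1 0 (τ / 2) * theta2 u (τ / 2) / (theta1 u (τ / 2) * theta2 0 (τ / 2)) := by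
  rw [← L1 u hτ, L2 u hτ]
  unfold Sp zeta1 zeta4
  change d1 u τ / _ - d4 u τ / _ = _
  field_simp

lemma nz (u : ℂ) {τ : ℂ} (hτ : 0 < τ.im) (h1 : theta1 u τ ≠ 0) (h4 : theta4 u τ ≠ 0) :
    theta1 u (τ / 2) ≠ 0 ∧ theta2 0 (τ / 2) ≠ 0 := by
  have h : theta1 u (τ / 2) * theta2 0 (τ / 2) ≠ 0 := by
    rw [← L1 u hτ]; exact mul_ne_zero two_ne_zero (mul_ne_zero h1 h4)
  exact ⟨left_ne_zero_of_mul h, right_ne_zero_of_mul h⟩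

/-- Degenerate Fay identity. -/
lemma fay (z w : ℂ) {τ : ℂ} (hτ : 0 < τ.im) (hz1 : theta1 z τ ≠ 0) (hz4 : theta4 z τ ≠ 0)
    (hw1 : theta1 w τ ≠ 0) (hw4 : theta4 w τ ≠ 0)
    (hs1 : theta1 (z + w) τ ≠ 0) (hs4 : theta4 (z + w) τ ≠ 0)
    (hs2 : theta2 (z + w) (τ / 2) ≠ 0) :
    Sp z τ * Sp w τ
      = Sp (z + w) τ * (zeta1 z (τ / 2) + zeta1 w (τ / 2) - zeta2 (z + w) (τ / 2)) := by
  rw [Sp_eq z hτ hz1 hz4, Sp_eq w hτ hw1 hw4, Sp_eq _ hτ hs1 hs4]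
  obtain ⟨a1, a0⟩ := nz z hτ hz1 hz4
  obtain ⟨b1, -⟩ := nz w hτ hw1 hw4
  obtain ⟨c1, -⟩ := nz _ hτ hs1 hs4
  have h := L7 z w hτ
  unfold zeta1 zeta2
  change _ = _ * (d1 z _ / _ + d1 w _ / _ - d2 (z + w) _ / _)
  generalize d1 0 (τ / 2) = A0 at *
  generalize theta2 0 (τ / 2) = B0 at *
  generalize theta1 z (τ / 2) = A1 at *
  generalize theta1 w (τ / 2) = A2 at *
  generalize theta1 (z + w) (τ / 2) = A3 at *
  generalize theta2 (z + w) (τ / 2) = B3 at *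
  field_simp
  linear_combination A0 * h

lemma diffZ1 {u τ : ℂ} (hτ : 0 < τ.im) (h : theta1 u τ ≠ 0) :
    DifferentiableAt ℂ (fun v => zeta1 v τ) u :=
  DifferentiableAt.div (diffd (diff1 hτ) u) (diff1 hτ u) h
lemma diffZ2 {u τ : ℂ} (hτ : 0 < τ.im) (h : theta2 u τ ≠ 0) :
    DifferentiableAt ℂ (fun v => zeta2 v τ) u :=
  DifferentiableAt.div (diffd (diff2 hτ) u) (diff2 hτ u) h
lemma diffZ4 {u τ : ℂ} (hτ : 0 < τ.im) (h : theta4 u τ ≠ 0) :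
    DifferentiableAt ℂ (fun v => zeta4 v τ) u :=
  DifferentiableAt.div (diffd (diff4 hτ) u) (diff4 hτ u) h
lemma diffSp {u τ : ℂ} (hτ : 0 < τ.im) (h1 : theta1 u τ ≠ 0) (h4 : theta4 u τ ≠ 0) :
    DifferentiableAt ℂ (fun v => Sp v τ) u :=
  (diffZ1 hτ h1).sub (diffZ4 hτ h4)

lemma zeta1_neg (u τ : ℂ) : zeta1 (-u) τ = - zeta1 u τ := by
  change d1 (-u) τ / _ = -(d1 u τ / _)
  rw [d1_neg, theta1_neg, div_neg]

lemma zeta4_neg (u τ : ℂ) : zeta4 (-u) τ = - zeta4 u τ := by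
  change d4 (-u) τ / _ = -(d4 u τ / _)
  rw [d4_neg, theta4_neg, neg_div]

lemma Sp_neg (u τ : ℂ) : Sp (-u) τ = - Sp u τ := by
  unfold Sp; rw [zeta1_neg, zeta4_neg]; ring

lemma Spp_neg (u τ : ℂ) : Spp (-u) τ = Spp u τ := deriv_odd (fun u => Sp_neg u τ) u

lemma wp1_neg (u τ : ℂ) : wp1 (-u) τ = wp1 u τ := by
  unfold wp1; rw [deriv_odd (fun u => zeta1_neg u τ) u]

lemma shift {f : ℂ → ℂ} {z w : ℂ} (hf : DifferentiableAt ℂ f (z + w)) :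
    HasDerivAt (fun v => f (v + w)) (deriv f (z + w)) z :=
  hf.hasDerivAt.comp_add_const z w

lemma key (x y : ℂ) {τ : ℂ} (hτ : 0 < τ.im)
    (h1 : theta1 y τ ≠ 0) (h2 : theta4 y τ ≠ 0)
    (h5 : theta1 x τ ≠ 0) (h6 : theta4 x τ ≠ 0)
    (h9 : theta1 (x - y) τ ≠ 0) (h10 : theta4 (x - y) τ ≠ 0)
    (h15 : theta2 y (τ / 2) ≠ 0) :
    Sp y τ * (wp1 (x - y) (τ / 2) - wp2 y (τ / 2))
      + Spp y τ * (-zeta1 x (τ / 2) + zeta1 (x - y) (τ / 2) + zeta2 y (τ / 2))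
      + Spp (x - y) τ * Sp x τ = 0 := by
  obtain ⟨z, rfl⟩ : ∃ z, y = z + x := ⟨y - x, by ring⟩
  rw [show x - (z + x) = -z by ring] at *
  rw [Spp_neg, zeta1_neg, wp1_neg]
  rw [theta1_neg, neg_ne_zero] at h9
  rw [theta4_neg] at h10
  have hs := half_im hτ
  have hl := (diffSp hτ h9 h10).hasDerivAt.mul_const (Sp x τ)
  have hr := (shift (diffSp hτ h1 h2)).mul
    (((diffZ1 hs (nz z hτ h9 h10).1).hasDerivAt.add_const (zeta1 x (τ / 2))).sub
      (shift (diffZ2 hs h15)))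
  have ev : ∀ {f : ℂ → ℂ} {u : ℂ}, Differentiable ℂ f → f u ≠ 0 → ∀ᶠ v in nhds u, f v ≠ 0 :=
    fun {f u} hf hu => hf.continuous.continuousAt.eventually_ne hu
  have sh : ∀ {f : ℂ → ℂ}, Differentiable ℂ f → Differentiable ℂ (fun v => f (v + x)) :=
    fun hf => hf.comp (differentiable_id.add_const x)
  have he : (fun v => Sp v τ * Sp x τ) =ᶠ[nhds z] (fun v => Sp (v + x) τ *
      (zeta1 v (τ / 2) + zeta1 x (τ / 2) - zeta2 (v + x) (τ / 2))) := by
    filter_upwards [ev (diff1 hτ) h9, ev (diff4 hτ) h10, ev (sh (diff1 hτ)) h1,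
      ev (sh (diff4 hτ)) h2, ev (sh (diff2 hs)) h15] with v a b c d e
    exact fay v x hτ a b h5 h6 c d e
  have h := (hl.congr_of_eventuallyEq he.symm).unique hr
  change Spp z τ * _ = Spp (z + x) τ * (zeta1 z (τ / 2) + zeta1 x (τ / 2) - zeta2 (z + x) (τ / 2))
    + Sp (z + x) τ * (_ - _) at h
  unfold wp1 wp2
  linear_combination h

end AppE

/-- Vanishing of f (Appendix E): the identity proving that S(u(z)) satisfies the
conserved-density equation along solutions of the elliptic Löwner and
Gibbons–Tsarev systems. Here σ = τ/2. -/
theorem appendixE_f_vanishes (τ u x y : ℂ) (hτ : 0 < τ.im)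
    (h1 : theta1 y τ ≠ 0) (h2 : theta4 y τ ≠ 0)
    (h3 : theta1 (u + y) τ ≠ 0) (h4 : theta4 (u + y) τ ≠ 0)
    (h5 : theta1 x τ ≠ 0) (h6 : theta4 x τ ≠ 0)
    (h7 : theta1 (u + x) τ ≠ 0) (h8 : theta4 (u + x) τ ≠ 0)
    (h9 : theta1 (x - y) τ ≠ 0) (h10 : theta4 (x - y) τ ≠ 0)
    (h11 : theta1 (x - y) (τ / 2) ≠ 0) (h12 : theta1 (u + x) (τ / 2) ≠ 0)
    (h13 : theta1 x (τ / 2) ≠ 0)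
    (h14 : theta2 (u + y) (τ / 2) ≠ 0) (h15 : theta2 y (τ / 2) ≠ 0) :
    2 * Sp y τ * Sp (u + y) τ * wp1 (x - y) (τ / 2)
      + Sp y τ * Spp (u + y) τ
          * (-zeta1 (u + x) (τ / 2) + zeta1 (x - y) (τ / 2) + zeta2 (u + y) (τ / 2))
      - Sp y τ * Sp (u + y) τ * wp2 (u + y) (τ / 2)
      + Spp y τ * Sp (u + y) τ
          * (-zeta1 x (τ / 2) + zeta1 (x - y) (τ / 2) + zeta2 y (τ / 2))
      - Sp y τ * Sp (u + y) τ * wp2 y (τ / 2)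
      + Spp (x - y) τ * (Sp x τ * Sp (u + y) τ + Sp y τ * Sp (u + x) τ) = 0 := by
  have A := AppE.key x y hτ h1 h2 h5 h6 h9 h10 h15
  have hd : u + x - (u + y) = x - y := by ring
  have B := AppE.key (u + x) (u + y) hτ h3 h4 h7 h8 (by rwa [hd]) (by rwa [hd]) h14
  rw [hd] at B
  linear_combination Sp (u + y) τ * A + Sp y τ * B
end

section
/- Theta representation and Landen-type identity for S' (formula (n2)): Let τ lie in the complex upper half-plane and let u ∈ ℂ be such that θ₁(u,τ)·θ₄(u,τ) ≠ 0 and θ₁(u, τ/2) ≠ 0. Then ζ₁(u,τ) − ζ₄(u,τ) = π θ₄(0,τ)² · θ₂(u,τ)θ₃(u,τ) / (θ₁(u,τ)θ₄(u,τ)) = π θ₃(0, τ/2)·θ₄(0, τ/2) · θ₂(u, τ/2)/θ₁(u, τ/2). -/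
open Complex

noncomputable def auxC (τ : ℂ) : ℂ :=
  ∑' l : ℤ, Complex.exp ((Real.pi : ℂ) * Complex.I * (τ / 2) * (2 * (l : ℂ) + 1/2)^2)
noncomputable def auxD (τ : ℂ) : ℂ :=
  ∑' l : ℤ, (2 * (l : ℂ) + 1/2) *
    Complex.exp ((Real.pi : ℂ) * Complex.I * (τ / 2) * (2 * (l : ℂ) + 1/2)^2)

lemma aux_exp_two (z : ℂ) (j : ℤ) :
    Complex.exp (z + j * (2 * (Real.pi : ℂ) * Complex.I)) = Complex.exp z := by
  rw [Complex.exp_add, Complex.exp_int_mul_two_pi_mul_I, mul_one]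

lemma aux_exp_pi (z : ℂ) :
    Complex.exp (z + (Real.pi : ℂ) * Complex.I) = -Complex.exp z := by
  rw [Complex.exp_add, Complex.exp_pi_mul_I]; ring

lemma aux_exp_half (z : ℂ) :
    Complex.exp (z + (Real.pi : ℂ) * Complex.I / 2) = Complex.I * Complex.exp z := by
  rw [Complex.exp_add]
  have : (Real.pi : ℂ) * Complex.I / 2 = (Real.pi / 2 : ℂ) * Complex.I := by ring
  rw [this, Complex.exp_pi_div_two_mul_I]; ring

/-- summability of terms -/
lemma aux_summable (τ : ℂ) (hτ : 0 < τ.im) (u c : ℂ) :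
    Summable (fun k : ℤ => Complex.exp ((Real.pi : ℂ) * Complex.I * τ * ((k : ℂ) + c)^2
      + 2 * (Real.pi : ℂ) * Complex.I * u * ((k : ℂ) + c))) := by
  have h := ((summable_jacobiTheta₂_term_iff (u + c * τ) τ).2 hτ).mul_left
    (Complex.exp ((Real.pi : ℂ) * Complex.I * τ * c ^ 2 + 2 * (Real.pi : ℂ) * Complex.I * u * c))
  refine h.congr fun k => ?_
  rw [jacobiTheta₂_term, ← Complex.exp_add]
  congr 1; ring

lemma aux_summable' (τ : ℂ) (hτ : 0 < τ.im) (u c : ℂ) :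
    Summable (fun k : ℤ => 2 * (Real.pi : ℂ) * Complex.I * ((k : ℂ) + c) *
      Complex.exp ((Real.pi : ℂ) * Complex.I * τ * ((k : ℂ) + c)^2
      + 2 * (Real.pi : ℂ) * Complex.I * u * ((k : ℂ) + c))) := by
  have h := ((summable_jacobiTheta₂'_term_iff (u + c * τ) τ).2 hτ).mul_left
    (Complex.exp ((Real.pi : ℂ) * Complex.I * τ * c ^ 2 + 2 * (Real.pi : ℂ) * Complex.I * u * c))
  have h2 := (aux_summable τ hτ u c).mul_left (2 * (Real.pi : ℂ) * Complex.I * c)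
  refine (h.add h2).congr fun k => ?_
  rw [jacobiTheta₂'_term, jacobiTheta₂_term, mul_left_comm, ← Complex.exp_add]
  have : (Real.pi : ℂ) * Complex.I * τ * c ^ 2 + 2 * (Real.pi : ℂ) * Complex.I * u * c +
    (2 * (Real.pi : ℂ) * Complex.I * k * (u + c * τ) + (Real.pi : ℂ) * Complex.I * k ^ 2 * τ)
    = (Real.pi : ℂ) * Complex.I * τ * ((k : ℂ) + c)^2
      + 2 * (Real.pi : ℂ) * Complex.I * u * ((k : ℂ) + c) := by ring
  rw [this]; ring

/-- derivative of the shifted theta series -/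
lemma aux_hasDeriv (τ : ℂ) (hτ : 0 < τ.im) (u c : ℂ) :
    HasDerivAt (fun v => ∑' k : ℤ, Complex.exp ((Real.pi : ℂ) * Complex.I * τ * ((k : ℂ) + c)^2
      + 2 * (Real.pi : ℂ) * Complex.I * v * ((k : ℂ) + c)))
     (∑' k : ℤ, 2 * (Real.pi : ℂ) * Complex.I * ((k : ℂ) + c) *
      Complex.exp ((Real.pi : ℂ) * Complex.I * τ * ((k : ℂ) + c)^2
      + 2 * (Real.pi : ℂ) * Complex.I * u * ((k : ℂ) + c))) u := by
  have key : ∀ (v : ℂ) (k : ℤ), Complex.exp ((Real.pi : ℂ) * Complex.I * τ * ((k : ℂ) + c)^2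
      + 2 * (Real.pi : ℂ) * Complex.I * v * ((k : ℂ) + c)) =
      Complex.exp ((Real.pi : ℂ) * Complex.I * τ * c ^ 2 + 2 * (Real.pi : ℂ) * Complex.I * v * c)
       * jacobiTheta₂_term k (v + c * τ) τ := by
    intro v k
    rw [jacobiTheta₂_term, ← Complex.exp_add]
    congr 1; ring
  have e1 : (fun v => ∑' k : ℤ, Complex.exp ((Real.pi : ℂ) * Complex.I * τ * ((k : ℂ) + c)^2
      + 2 * (Real.pi : ℂ) * Complex.I * v * ((k : ℂ) + c))) = fun v =>
      Complex.exp ((Real.pi : ℂ) * Complex.I * τ * c ^ 2 + 2 * (Real.pi : ℂ) * Complex.I * v * c)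
       * jacobiTheta₂ (v + c * τ) τ := by
    funext v
    rw [jacobiTheta₂, ← tsum_mul_left]
    exact tsum_congr (key v)
  rw [e1]
  have d1 : HasDerivAt (fun v : ℂ => jacobiTheta₂ (v + c * τ) τ)
      (jacobiTheta₂' (u + c * τ) τ) u :=
    (hasDerivAt_jacobiTheta₂_fst (u + c * τ) hτ).comp_add_const u (c * τ)
  have d2 : HasDerivAt (fun v : ℂ => Complex.exp ((Real.pi : ℂ) * Complex.I * τ * c ^ 2
      + 2 * (Real.pi : ℂ) * Complex.I * v * c))
      (Complex.exp ((Real.pi : ℂ) * Complex.I * τ * c ^ 2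
      + 2 * (Real.pi : ℂ) * Complex.I * u * c) * (2 * (Real.pi : ℂ) * Complex.I * c)) u := by
    apply HasDerivAt.cexp
    have := (((hasDerivAt_id u).const_mul (2 * (Real.pi : ℂ) * Complex.I)).mul_const c).const_add
      ((Real.pi : ℂ) * Complex.I * τ * c ^ 2)
    simpa using this
  refine (d2.mul d1).congr_deriv ?_
  have hs1 := ((summable_jacobiTheta₂_term_iff (u + c * τ) τ).2 hτ).mul_left
    (Complex.exp ((Real.pi : ℂ) * Complex.I * τ * c ^ 2
      + 2 * (Real.pi : ℂ) * Complex.I * u * c) * (2 * (Real.pi : ℂ) * Complex.I * c))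
  have hs2 := ((summable_jacobiTheta₂'_term_iff (u + c * τ) τ).2 hτ).mul_left
    (Complex.exp ((Real.pi : ℂ) * Complex.I * τ * c ^ 2 + 2 * (Real.pi : ℂ) * Complex.I * u * c))
  rw [jacobiTheta₂, jacobiTheta₂', ← tsum_mul_left, ← tsum_mul_left, ← hs1.tsum_add hs2]
  refine tsum_congr fun k => ?_
  rw [key, jacobiTheta₂'_term]; ring

/-- convolution -/
lemma aux_conv (f g : ℤ → ℂ) (hf : Summable f) (hg : Summable g) :
    HasSum (fun a : ℤ => ∑' n : ℤ, f (a - n) * g n) ((∑' m, f m) * ∑' n, g n) ∧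
    ∀ a, Summable fun n : ℤ => f (a - n) * g n := by
  have h := summable_mul_of_summable_norm hf.norm hg.norm
  let e : ℤ × ℤ ≃ ℤ × ℤ :=
    ⟨fun p => (p.1 - p.2, p.2), fun p => (p.1 + p.2, p.2), fun p => by simp, fun p => by simp⟩
  have h' : Summable (fun p : ℤ × ℤ => f (p.1 - p.2) * g p.2) := (e.summable_iff).2 h
  refine ⟨?_, fun a => h'.prod_factor a⟩
  have h3 := h'.hasSum.prod_fiberwise (fun a => (h'.prod_factor a).hasSum)
  rw [tsum_mul_tsum_of_summable_norm hf.norm hg.norm, ← e.tsum_eq]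
  exact h3

lemma aux_even (F : ℂ → ℂ) (j : ℤ) :
    ∑' n : ℤ, F (((2 * j : ℤ) : ℂ) - 2 * n + 1/2) = ∑' l : ℤ, F (2 * l + 1/2) := by
  rw [← (Equiv.subLeft j).tsum_eq]
  refine tsum_congr fun n => ?_
  congr 1; simp; ring

lemma aux_odd (F : ℂ → ℂ) (j : ℤ) :
    ∑' n : ℤ, F (((2 * j + 1 : ℤ) : ℂ) - 2 * n + 1/2) = ∑' l : ℤ, F (-(2 * l + 1/2)) := by
  rw [← (Equiv.subRight (j + 1)).tsum_eq (fun l : ℤ => F (-(2 * (l : ℂ) + 1/2)))]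
  refine tsum_congr fun n => ?_
  congr 1; simp; ring

lemma aux_C (τ : ℂ) (a : ℤ) :
    ∑' n : ℤ, Complex.exp ((Real.pi : ℂ) * Complex.I * (τ / 2) * ((a : ℂ) - 2 * n + 1/2)^2)
     = auxC τ := by
  rcases Int.even_or_odd' a with ⟨j, rfl | rfl⟩
  · exact aux_even (fun z => Complex.exp ((Real.pi : ℂ) * Complex.I * (τ / 2) * z ^ 2)) j
  · refine (aux_odd (fun z => Complex.exp ((Real.pi : ℂ) * Complex.I * (τ / 2) * z ^ 2)) j).trans ?_
    simp only [neg_sq]; rfl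

lemma aux_D_even (τ : ℂ) (j : ℤ) :
    ∑' n : ℤ, (((2 * j : ℤ) : ℂ) - 2 * n + 1/2) *
      Complex.exp ((Real.pi : ℂ) * Complex.I * (τ / 2) * (((2 * j : ℤ) : ℂ) - 2 * n + 1/2)^2)
     = auxD τ :=
  aux_even (fun z => z * Complex.exp ((Real.pi : ℂ) * Complex.I * (τ / 2) * z ^ 2)) j

lemma aux_D_odd (τ : ℂ) (j : ℤ) :
    ∑' n : ℤ, (((2 * j + 1 : ℤ) : ℂ) - 2 * n + 1/2) *
      Complex.exp ((Real.pi : ℂ) * Complex.I * (τ / 2) * (((2 * j + 1 : ℤ) : ℂ) - 2 * n + 1/2)^2)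
     = - auxD τ := by
  refine (aux_odd (fun z => z * Complex.exp ((Real.pi : ℂ) * Complex.I * (τ / 2) * z ^ 2)) j).trans ?_
  simp only [neg_sq, neg_mul]; rw [tsum_neg]; rfl

lemma aux_summable0 (τ : ℂ) (hτ : 0 < τ.im) (u : ℂ) :
    Summable (fun k : ℤ => Complex.exp ((Real.pi : ℂ) * Complex.I * τ * (k : ℂ)^2
      + 2 * (Real.pi : ℂ) * Complex.I * u * (k : ℂ))) := by
  simpa using aux_summable τ hτ u 0

lemma aux_prod (τ : ℂ) (hτ : 0 < τ.im) (u : ℂ) :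
    (∑' k : ℤ, Complex.exp ((Real.pi : ℂ) * Complex.I * τ * ((k : ℂ) + 1/2)^2
      + 2 * (Real.pi : ℂ) * Complex.I * u * ((k : ℂ) + 1/2))) *
    (∑' k : ℤ, Complex.exp ((Real.pi : ℂ) * Complex.I * τ * (k : ℂ)^2
      + 2 * (Real.pi : ℂ) * Complex.I * u * (k : ℂ))) =
    auxC τ * ∑' k : ℤ, Complex.exp ((Real.pi : ℂ) * Complex.I * (τ / 2) * ((k : ℂ) + 1/2)^2
      + 2 * (Real.pi : ℂ) * Complex.I * u * ((k : ℂ) + 1/2)) := by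
  rw [← (aux_conv _ _ (aux_summable τ hτ u (1/2)) (aux_summable0 τ hτ u)).1.tsum_eq,
    ← tsum_mul_left]
  refine tsum_congr fun a => ?_
  rw [← aux_C τ a, ← tsum_mul_right]
  refine tsum_congr fun n => ?_
  rw [← Complex.exp_add, ← Complex.exp_add]
  congr 1; push_cast; ring

lemma theta14 (τ : ℂ) (hτ : 0 < τ.im) (u : ℂ) :
    theta1 u τ * theta4 u τ = auxC τ * theta1 u (τ / 2) := by
  have := aux_prod τ hτ (u + 1/2)
  unfold theta1 theta4
  linear_combination -this

lemma theta23 (τ : ℂ) (hτ : 0 < τ.im) (u : ℂ) :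
    theta2 u τ * theta3 u τ = auxC τ * theta2 u (τ / 2) := aux_prod τ hτ u

lemma deriv_theta1 (τ : ℂ) (hτ : 0 < τ.im) (u : ℂ) :
    deriv (fun v => theta1 v τ) u = -∑' k : ℤ, 2 * (Real.pi : ℂ) * Complex.I * ((k : ℂ) + 1/2) *
      Complex.exp ((Real.pi : ℂ) * Complex.I * τ * ((k : ℂ) + 1/2)^2
      + 2 * (Real.pi : ℂ) * Complex.I * (u + 1/2) * ((k : ℂ) + 1/2)) := by
  have := ((aux_hasDeriv τ hτ (u + 1/2) (1/2)).comp_add_const u (1/2)).neg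
  exact this.deriv

lemma deriv_theta4 (τ : ℂ) (hτ : 0 < τ.im) (u : ℂ) :
    deriv (fun v => theta4 v τ) u = ∑' k : ℤ, 2 * (Real.pi : ℂ) * Complex.I * (k : ℂ) *
      Complex.exp ((Real.pi : ℂ) * Complex.I * τ * (k : ℂ)^2
      + 2 * (Real.pi : ℂ) * Complex.I * (u + 1/2) * (k : ℂ)) := by
  have := ((aux_hasDeriv τ hτ (u + 1/2) 0).comp_add_const u (1/2))
  simp only [add_zero] at this
  exact this.deriv

lemma theta_wronskian (τ : ℂ) (hτ : 0 < τ.im) (u : ℂ) :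
    deriv (fun v => theta1 v τ) u * theta4 u τ - theta1 u τ * deriv (fun v => theta4 v τ) u
      = 2 * (Real.pi : ℂ) * auxD τ * theta2 u (τ / 2) := by
  have s4 : Summable (fun k : ℤ => 2 * (Real.pi : ℂ) * Complex.I * (k : ℂ) *
      Complex.exp ((Real.pi : ℂ) * Complex.I * τ * (k : ℂ)^2
      + 2 * (Real.pi : ℂ) * Complex.I * (u + 1/2) * (k : ℂ))) := by
    simpa using aux_summable' τ hτ (u + 1/2) 0
  obtain ⟨A1, A2⟩ := aux_conv _ _ (aux_summable' τ hτ (u + 1/2) (1/2)) (aux_summable0 τ hτ (u + 1/2))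
  obtain ⟨B1, B2⟩ := aux_conv _ _ (aux_summable τ hτ (u + 1/2) (1/2)) s4
  have key := (B1.sub A1).tsum_eq
  rw [deriv_theta1 τ hτ, deriv_theta4 τ hτ]
  unfold theta1 theta4 theta2
  rw [neg_mul, neg_mul, sub_neg_eq_add, neg_add_eq_sub, ← key, ← tsum_mul_left]
  refine tsum_congr fun a => ?_
  rw [← (B2 a).tsum_sub (A2 a)]
  have e : ∀ n : ℤ,
      Complex.exp ((Real.pi : ℂ) * Complex.I * τ * (((a - n : ℤ) : ℂ) + 1/2)^2
      + 2 * (Real.pi : ℂ) * Complex.I * (u + 1/2) * (((a - n : ℤ) : ℂ) + 1/2)) *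
      Complex.exp ((Real.pi : ℂ) * Complex.I * τ * (n : ℂ)^2
      + 2 * (Real.pi : ℂ) * Complex.I * (u + 1/2) * (n : ℂ)) =
      Complex.exp ((Real.pi : ℂ) * Complex.I * (τ / 2) * ((a : ℂ) + 1/2)^2
      + 2 * (Real.pi : ℂ) * Complex.I * (u + 1/2) * ((a : ℂ) + 1/2)) *
      Complex.exp ((Real.pi : ℂ) * Complex.I * (τ / 2) * ((a : ℂ) - 2 * n + 1/2)^2) := by
    intro n
    rw [← Complex.exp_add, ← Complex.exp_add]
    congr 1; push_cast; ring
  rw [tsum_congr (g := fun n : ℤ => (-(2 * (Real.pi : ℂ) * Complex.I) *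
      Complex.exp ((Real.pi : ℂ) * Complex.I * (τ / 2) * ((a : ℂ) + 1/2)^2
      + 2 * (Real.pi : ℂ) * Complex.I * (u + 1/2) * ((a : ℂ) + 1/2))) *
      (((a : ℂ) - 2 * n + 1/2) *
      Complex.exp ((Real.pi : ℂ) * Complex.I * (τ / 2) * ((a : ℂ) - 2 * n + 1/2)^2)))
      (fun n => by
        have h := e n
        have hc : ((a - n : ℤ) : ℂ) = (a : ℂ) - n := by push_cast; ring
        rw [hc] at h ⊢
        linear_combination (-(2 * (Real.pi : ℂ) * Complex.I) * ((a : ℂ) - 2 * n + 1/2)) * h), tsum_mul_left]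
  have I2 := Complex.I_mul_I
  rcases Int.even_or_odd' a with ⟨j, rfl | rfl⟩
  · rw [aux_D_even]
    have : (Real.pi : ℂ) * Complex.I * (τ / 2) * (((2 * j : ℤ) : ℂ) + 1/2)^2
      + 2 * (Real.pi : ℂ) * Complex.I * (u + 1/2) * (((2 * j : ℤ) : ℂ) + 1/2) =
      ((Real.pi : ℂ) * Complex.I * (τ / 2) * (((2 * j : ℤ) : ℂ) + 1/2)^2
      + 2 * (Real.pi : ℂ) * Complex.I * u * (((2 * j : ℤ) : ℂ) + 1/2)) +
      (Real.pi : ℂ) * Complex.I / 2 + j * (2 * (Real.pi : ℂ) * Complex.I) := by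
      push_cast; ring
    rw [this, aux_exp_two, aux_exp_half]
    generalize Complex.exp _ = E
    linear_combination -2 * (Real.pi : ℂ) * E * auxD τ * I2
  · rw [aux_D_odd]
    have : (Real.pi : ℂ) * Complex.I * (τ / 2) * (((2 * j + 1 : ℤ) : ℂ) + 1/2)^2
      + 2 * (Real.pi : ℂ) * Complex.I * (u + 1/2) * (((2 * j + 1 : ℤ) : ℂ) + 1/2) =
      ((Real.pi : ℂ) * Complex.I * (τ / 2) * (((2 * j + 1 : ℤ) : ℂ) + 1/2)^2
      + 2 * (Real.pi : ℂ) * Complex.I * u * (((2 * j + 1 : ℤ) : ℂ) + 1/2)) +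
      (Real.pi : ℂ) * Complex.I / 2 + (Real.pi : ℂ) * Complex.I
       + j * (2 * (Real.pi : ℂ) * Complex.I) := by
      push_cast; ring
    rw [this, aux_exp_two, aux_exp_pi, aux_exp_half]
    generalize Complex.exp _ = E
    linear_combination -2 * (Real.pi : ℂ) * E * auxD τ * I2

lemma aux_exp_eq (z w : ℂ) (k : ℤ) (h : z = w + k * (2 * (Real.pi : ℂ) * Complex.I)) :
    Complex.exp z = Complex.exp w := by rw [h, aux_exp_two]

lemma aux_hs {f g : ℤ → ℂ} {s : ℂ} (h : HasSum f s) (e : ∀ l, g l = f l) : HasSum g s := by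
  have : g = f := funext e
  rw [this]; exact h

lemma aux_even_add_odd {f : ℤ → ℂ} {a b : ℂ} (he : HasSum (fun j : ℤ => f (2 * j)) a)
    (ho : HasSum (fun j : ℤ => f (2 * j + 1)) b) : HasSum f (a + b) := by
  have h2 : Function.Injective (fun j : ℤ => 2 * j) := fun x y h => by
    have : 2 * x = 2 * y := h
    omega
  have h3 : Function.Injective (fun j : ℤ => 2 * j + 1) := fun x y h => by
    have : 2 * x + 1 = 2 * y + 1 := h
    omega
  have he' := h2.hasSum_range_iff.2 he
  have ho' := h3.hasSum_range_iff.2 ho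
  refine he'.add_isCompl ?_ ho'
  have r1 : Set.range (fun j : ℤ => 2 * j) = {n | Even n} := by
    ext n; simp [even_iff_two_dvd, dvd_def]
  have r2 : Set.range (fun j : ℤ => 2 * j + 1) = {n | Odd n} := by
    ext n; simp [Odd]
  rw [r1, r2]
  exact Int.isCompl_even_odd

lemma summable_C (τ : ℂ) (hτ : 0 < τ.im) : Summable (fun l : ℤ =>
    Complex.exp ((Real.pi : ℂ) * Complex.I * (τ / 2) * (2 * (l : ℂ) + 1/2)^2)) := by
  refine (aux_summable (2 * τ) (by simpa using hτ) 0 (1/4)).congr fun l => ?_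
  congr 1; ring

lemma summable_D (τ : ℂ) (hτ : 0 < τ.im) : Summable (fun l : ℤ => (2 * (l : ℂ) + 1/2) *
    Complex.exp ((Real.pi : ℂ) * Complex.I * (τ / 2) * (2 * (l : ℂ) + 1/2)^2)) := by
  refine ((aux_summable' (2 * τ) (by simpa using hτ) 0 (1/4)).mul_left
    (1 / ((Real.pi : ℂ) * Complex.I))).congr fun l => ?_
  have hp : (Real.pi : ℂ) ≠ 0 := by exact_mod_cast Real.pi_ne_zero
  have hI := Complex.I_ne_zero
  have : (Real.pi : ℂ) * Complex.I * (2 * τ) * ((l : ℂ) + 1/4)^2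
      + 2 * (Real.pi : ℂ) * Complex.I * 0 * ((l : ℂ) + 1/4) =
      (Real.pi : ℂ) * Complex.I * (τ / 2) * (2 * (l : ℂ) + 1/2)^2 := by ring
  rw [this]
  field_simp
  ring

/-- reflection `l ↦ -1 - l` -/
lemma aux_refl {F : ℂ → ℂ} {s : ℂ} (h : HasSum (fun l : ℤ => F (2 * (l : ℂ) + 1/2)) s) :
    HasSum (fun l : ℤ => F (-(((2 * l + 1 : ℤ) : ℂ) + 1/2))) s := by
  have := (Equiv.subLeft (-1 : ℤ)).hasSum_iff.2 h
  refine aux_hs this fun l => ?_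
  simp only [Function.comp, Equiv.subLeft_apply]
  congr 1; push_cast; ring

lemma hasSum_C (τ : ℂ) (hτ : 0 < τ.im) : HasSum (fun l : ℤ =>
    Complex.exp ((Real.pi : ℂ) * Complex.I * τ * (2 * (l : ℂ) + 1/2)^2)) (auxC (2 * τ)) := by
  have h := (summable_C (2 * τ) (by simpa using hτ)).hasSum
  have e : 2 * τ / 2 = τ := by ring
  rw [e] at h
  unfold auxC
  rw [e]; exact h

lemma hasSum_D (τ : ℂ) (hτ : 0 < τ.im) : HasSum (fun l : ℤ => (2 * (l : ℂ) + 1/2) *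
    Complex.exp ((Real.pi : ℂ) * Complex.I * τ * (2 * (l : ℂ) + 1/2)^2)) (auxD (2 * τ)) := by
  have h := (summable_D (2 * τ) (by simpa using hτ)).hasSum
  have e : 2 * τ / 2 = τ := by ring
  rw [e] at h
  unfold auxD
  rw [e]; exact h

lemma theta2_zero (τ : ℂ) (hτ : 0 < τ.im) : theta2 0 τ = 2 * auxC (2 * τ) := by
  have h := hasSum_C τ hτ
  have h' := aux_refl (F := fun z => Complex.exp ((Real.pi : ℂ) * Complex.I * τ * z ^ 2)) h
  have := aux_even_add_odd (f := fun k : ℤ =>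
      Complex.exp ((Real.pi : ℂ) * Complex.I * τ * ((k : ℂ) + 1/2)^2
      + 2 * (Real.pi : ℂ) * Complex.I * 0 * ((k : ℂ) + 1/2)))
      (by convert h using 3 with l; push_cast; ring) (by convert h' using 3 with l; push_cast; ring)
  rw [theta2, this.tsum_eq]; ring

lemma aux_I_even (z : ℂ) (j : ℤ) : Complex.exp (z +
    2 * (Real.pi : ℂ) * Complex.I * (0 + 1/2) * (((2 * j : ℤ) : ℂ) + 1/2)) =
    Complex.I * Complex.exp z := by
  rw [← aux_exp_half]
  apply aux_exp_eq _ _ j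
  push_cast; ring

lemma aux_I_odd (z : ℂ) (j : ℤ) : Complex.exp (z +
    2 * (Real.pi : ℂ) * Complex.I * (0 + 1/2) * (((2 * j + 1 : ℤ) : ℂ) + 1/2)) =
    -(Complex.I * Complex.exp z) := by
  rw [← aux_exp_half, ← aux_exp_pi]
  apply aux_exp_eq _ _ j
  push_cast; ring

lemma theta1_zero (τ : ℂ) (hτ : 0 < τ.im) : theta1 0 τ = 0 := by
  have h := hasSum_C τ hτ
  have h' := aux_refl (F := fun z => Complex.exp ((Real.pi : ℂ) * Complex.I * τ * z ^ 2)) h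
  have := aux_even_add_odd (f := fun k : ℤ =>
      Complex.exp ((Real.pi : ℂ) * Complex.I * τ * ((k : ℂ) + 1/2)^2
      + 2 * (Real.pi : ℂ) * Complex.I * (0 + 1/2) * ((k : ℂ) + 1/2)))
      (by
        refine aux_hs (h.mul_left Complex.I) fun l => ?_
        rw [aux_I_even]; push_cast; rfl)
      (by
        refine aux_hs ((h'.mul_left Complex.I).neg) fun l => ?_
        rw [aux_I_odd, neg_sq])
  rw [theta1, this.tsum_eq]; ring

lemma deriv_theta1_zero (τ : ℂ) (hτ : 0 < τ.im) :
    deriv (fun v => theta1 v τ) 0 = 4 * (Real.pi : ℂ) * auxD (2 * τ) := by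
  have h := hasSum_D τ hτ
  have h' := aux_refl (F := fun z => z * Complex.exp ((Real.pi : ℂ) * Complex.I * τ * z ^ 2)) h
  have := aux_even_add_odd (f := fun k : ℤ => 2 * (Real.pi : ℂ) * Complex.I * ((k : ℂ) + 1/2) *
      Complex.exp ((Real.pi : ℂ) * Complex.I * τ * ((k : ℂ) + 1/2)^2
      + 2 * (Real.pi : ℂ) * Complex.I * (0 + 1/2) * ((k : ℂ) + 1/2)))
      (by
        refine aux_hs (h.mul_left (2 * (Real.pi : ℂ) * Complex.I * Complex.I)) fun l => ?_
        rw [aux_I_even]; push_cast; ring)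
      (by
        refine aux_hs ((h'.mul_left (2 * (Real.pi : ℂ) * Complex.I * Complex.I))) fun l => ?_
        rw [aux_I_odd, neg_sq]; ring)
  rw [deriv_theta1 τ hτ, this.tsum_eq]
  linear_combination -4 * (Real.pi : ℂ) * auxD (2 * τ) * Complex.I_mul_I

lemma theta34_half (τ : ℂ) (hτ : 0 < τ.im) :
    theta3 0 (τ / 2) * theta4 0 (τ / 2) = theta4 0 τ ^ 2 := by
  have hτ2 : 0 < (τ / 2).im := by simpa using hτ
  have h := (aux_conv _ _ (aux_summable0 (τ / 2) hτ2 0) (aux_summable0 (τ / 2) hτ2 (0 + 1/2))).1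
  have s := (aux_summable0 τ hτ (0 + 1/2)).hasSum
  unfold theta3
  rw [theta4, ← h.tsum_eq]
  have := aux_even_add_odd (f := fun a : ℤ => ∑' n : ℤ,
      Complex.exp ((Real.pi : ℂ) * Complex.I * (τ / 2) * ((a - n : ℤ) : ℂ)^2
      + 2 * (Real.pi : ℂ) * Complex.I * 0 * ((a - n : ℤ) : ℂ)) *
      Complex.exp ((Real.pi : ℂ) * Complex.I * (τ / 2) * (n : ℂ)^2
      + 2 * (Real.pi : ℂ) * Complex.I * (0 + 1/2) * (n : ℂ))) (b := 0)
      (by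
        refine aux_hs (s.mul_right (theta4 0 τ)) fun j => ?_
        rw [theta4, ← tsum_mul_left, ← (Equiv.subLeft j).tsum_eq]
        refine tsum_congr fun l => ?_
        rw [← Complex.exp_add, ← Complex.exp_add, Equiv.subLeft_apply]
        apply aux_exp_eq _ _ (-l)
        push_cast; ring)
      (by
        refine aux_hs (hasSum_zero) fun j => ?_
        have : ∀ x : ℂ, x = -x → x = 0 := fun x hx => by
          have : (2 : ℂ) * x = 0 := by linear_combination hx
          simpa using this
        apply this
        rw [← tsum_neg]
        conv_lhs => rw [← (Equiv.subLeft (2 * j + 1)).tsum_eq]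
        refine tsum_congr fun l => ?_
        rw [← Complex.exp_add, ← Complex.exp_add, ← aux_exp_pi, Equiv.subLeft_apply]
        apply aux_exp_eq _ _ (j - l)
        push_cast; ring)
  rw [this.tsum_eq, add_zero, pow_two]
  rfl

open Filter Topology in
lemma aux_lim (τ : ℂ) (hτ : 0 < τ.im) (w : ℤ → ℂ) (e : ℤ → ℤ) (e0 : e 0 = 0)
    (epos : ∀ l, l ≠ 0 → 0 < e l)
    (hs : Summable fun l => w l * Complex.exp ((Real.pi : ℂ) * Complex.I * τ * e l)) :
    Tendsto (fun N : ℕ => ∑' l, w l * Complex.exp ((Real.pi : ℂ) * Complex.I * (2 ^ N * τ) * e l))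
      atTop (𝓝 (w 0)) := by
  have hpow : ∀ (N : ℕ) (l : ℤ), Complex.exp ((Real.pi : ℂ) * Complex.I * (2 ^ N * τ) * e l) =
      Complex.exp ((Real.pi : ℂ) * Complex.I * τ * e l) ^ (2 ^ N) := by
    intro N l
    rw [← Complex.exp_nat_mul]
    congr 1; push_cast; ring
  have hnorm : ∀ l, l ≠ 0 → ‖Complex.exp ((Real.pi : ℂ) * Complex.I * τ * e l)‖ < 1 := by
    intro l hl
    rw [Complex.norm_exp, Real.exp_lt_one_iff]
    have : ((Real.pi : ℂ) * Complex.I * τ * e l).re = -(Real.pi * τ.im * (e l : ℝ)) := by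
      simp
    rw [this]
    have h1 : (0 : ℝ) < e l := by exact_mod_cast epos l hl
    have := Real.pi_pos
    have : 0 < Real.pi * τ.im * (e l : ℝ) := by positivity
    linarith
  have h0 : Complex.exp ((Real.pi : ℂ) * Complex.I * τ * e 0) = 1 := by simp [e0]
  have key : Tendsto (fun N : ℕ => ∑' l, w l *
      Complex.exp ((Real.pi : ℂ) * Complex.I * (2 ^ N * τ) * e l))
      atTop (𝓝 (∑' l : ℤ, if l = 0 then w 0 else 0)) := by
    refine tendsto_tsum_of_dominated_convergence (G := ℂ)
      (f := fun (N : ℕ) (l : ℤ) => w l *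
        Complex.exp ((Real.pi : ℂ) * Complex.I * (2 ^ N * τ) * e l))
      (g := fun l : ℤ => if l = 0 then w 0 else 0)
      (bound := fun l => ‖w l * Complex.exp ((Real.pi : ℂ) * Complex.I * τ * e l)‖) hs.norm ?_ ?_
    · intro l
      simp only [hpow]
      by_cases hl : l = 0
      · subst hl
        simp only [h0, one_pow, mul_one, if_true]
        exact tendsto_const_nhds
      · simp only [hl, if_false]
        have := ((tendsto_pow_atTop_nhds_zero_of_norm_lt_one (hnorm l hl)).comp
          (tendsto_pow_atTop_atTop_of_one_lt (one_lt_two : (1 : ℕ) < 2))).const_mul (w l)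
        simpa using this
    · refine Eventually.of_forall fun N l => ?_
      rw [hpow, norm_mul, norm_mul, norm_pow]
      refine mul_le_mul_of_nonneg_left ?_ (norm_nonneg _)
      refine pow_le_of_le_one (norm_nonneg _) ?_ (by positivity)
      by_cases hl : l = 0
      · subst hl; rw [h0]; simp
      · exact (hnorm l hl).le
  rwa [tsum_ite_eq] at key

open Filter Topology in
lemma aux_seq (c d t h e : ℕ → ℂ) (R1 : ∀ n, c n * d n = t n * d (n + 1))
    (R2 : ∀ n, c (n + 1) * h n = c n ^ 2) (R3 : ∀ n, t (n + 1) ^ 2 = h n * t n)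
    (ht : Tendsto t atTop (𝓝 1))
    (hc : Tendsto (fun n => e n * c n) atTop (𝓝 1))
    (hd : Tendsto (fun n => e n * d n) atTop (𝓝 (1/2))) (he : ∀ n, e n ≠ 0) :
    2 * d 0 = t 0 ^ 2 * c 0 := by
  have nz : ∀ x : ℕ → ℂ, Tendsto x atTop (𝓝 1) → (∀ n, x n = 0 → x (n + 1) = 0) →
      ∀ n, x n ≠ 0 := by
    intro x hx hs n hn
    have hall : ∀ m, x (n + m) = 0 := by
      intro m
      induction m with
      | zero => exact hn
      | succ m ih => exact hs _ ih
    obtain ⟨N, hN⟩ := eventually_atTop.1 (hx.eventually_ne one_ne_zero)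
    exact hN (n + N) (by omega) (hall N)
  have tn : ∀ n, t n ≠ 0 := nz t ht fun n hn => by
    have := R3 n
    rw [hn, mul_zero] at this
    exact pow_eq_zero_iff (two_ne_zero) |>.1 this
  have hn : ∀ n, h n ≠ 0 := fun n h0 => by
    have := R3 n
    rw [h0, zero_mul] at this
    exact tn _ (pow_eq_zero_iff (two_ne_zero) |>.1 this)
  have cn : ∀ n, c n ≠ 0 := by
    have := nz _ hc fun n h0 => by
      have c0 : c n = 0 := (mul_eq_zero.1 h0).resolve_left (he n)
      have := R2 n
      rw [c0] at this
      have : c (n + 1) = 0 := (mul_eq_zero.1 (this.trans (by simp))).resolve_right (hn n)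
      simp [this]
    exact fun n h0 => this n (by simp [h0])
  let r : ℕ → ℂ := fun n => 2 * (e n * d n) / ((e n * c n) * t n ^ 2)
  have hr : Tendsto r atTop (𝓝 1) := by
    have := (hd.const_mul 2).div (hc.mul (ht.pow 2)) (by simp)
    have e1 : (2 : ℂ) * (1 / 2) / (1 * 1 ^ 2) = 1 := by norm_num
    rw [e1] at this
    exact this
  have hr' : ∀ n, r n = 2 * d n / (c n * t n ^ 2) := fun n => by
    have := he n; have := cn n; have := tn n
    simp only [r]; field_simp
  have step : ∀ n, r (n + 1) = r n := by
    intro n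
    rw [hr', hr', div_eq_div_iff (mul_ne_zero (cn _) (pow_ne_zero _ (tn _)))
      (mul_ne_zero (cn _) (pow_ne_zero _ (tn _)))]
    apply mul_left_cancel₀ (cn n)
    have r1 := R1 n; have r2 := R2 n; have r3 := R3 n
    rw [r3]
    linear_combination (-2 * c (n + 1) * h n * t n) * r1 - 2 * d (n + 1) * t n ^ 2 * r2
  have const : ∀ n, r n = r 0 := by
    intro n
    induction n with
    | zero => rfl
    | succ n ih => rw [step, ih]
  have : r 0 = 1 := by
    have h2 : Tendsto r atTop (𝓝 (r 0)) := by
      have : r = fun _ => r 0 := funext const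
      rw [this]; exact tendsto_const_nhds
    exact tendsto_nhds_unique h2 hr
  rw [hr', div_eq_one_iff_eq (mul_ne_zero (cn _) (pow_ne_zero _ (tn _)))] at this
  rw [this]; ring

lemma auxD_eq (τ : ℂ) (hτ : 0 < τ.im) : 2 * auxD τ = theta4 0 τ ^ 2 * auxC τ := by
  have him : ∀ N : ℕ, 0 < ((2 : ℂ) ^ N * τ).im := by
    intro N
    have : ((2 : ℂ) ^ N * τ).im = 2 ^ N * τ.im := by
      have : ((2 : ℂ) ^ N) = ((2 ^ N : ℝ) : ℂ) := by push_cast; rfl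
      rw [this, Complex.im_ofReal_mul]
    rw [this]; positivity
  have hd : ∀ N : ℕ, (2 : ℂ) ^ (N + 1) * τ = 2 * (2 ^ N * τ) := fun N => by ring
  have e2 : ∀ l : ℤ, l ≠ 0 → 0 < 2 * l ^ 2 + l := by
    intro l hl
    rcases lt_or_gt_of_ne hl with h | h <;> nlinarith
  have half : ∀ σ : ℂ, 2 * (σ / 2) = σ := fun σ => by ring
  have hp : (Real.pi : ℂ) ≠ 0 := by exact_mod_cast Real.pi_ne_zero
  have key := aux_seq (fun n => auxC (2 ^ n * τ)) (fun n => auxD (2 ^ n * τ))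
    (fun n => theta4 0 (2 ^ n * τ)) (fun n => theta3 0 (2 ^ n * τ))
    (fun n => Complex.exp (-((Real.pi : ℂ) * Complex.I * (2 ^ n * τ) / 8))) ?_ ?_ ?_ ?_ ?_ ?_ ?_
  · simpa using key
  · intro n
    rw [hd]
    have h1 := him n
    generalize (2 : ℂ) ^ n * τ = σ at h1
    have h2 : 0 < (σ / 2).im := by simpa using h1
    have w := theta_wronskian σ h1 0
    rw [theta1_zero σ h1, deriv_theta1_zero σ h1, theta2_zero _ h2, half] at w
    apply mul_left_cancel₀ hp
    linear_combination -w / 4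
  · intro n
    rw [hd]
    have h1 := him n
    generalize (2 : ℂ) ^ n * τ = σ at h1
    have h2 : 0 < (σ / 2).im := by simpa using h1
    have w := theta23 σ h1 0
    rw [theta2_zero _ h2, theta2_zero _ h1, half] at w
    linear_combination w / 2
  · intro n
    rw [hd]
    have h1 := him n
    generalize (2 : ℂ) ^ n * τ = σ at h1
    have w := theta34_half (2 * σ) (by simpa using h1)
    have : 2 * σ / 2 = σ := by ring
    rw [this] at w
    exact w.symm
  · have := aux_lim τ hτ (fun l => Complex.exp (2 * (Real.pi : ℂ) * Complex.I * (0 + 1/2) * l))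
      (fun l => l ^ 2) (by simp) (fun l hl => by positivity)
      ((aux_summable0 τ hτ (0 + 1/2)).congr fun l => by
        rw [← Complex.exp_add]; congr 1; push_cast; ring)
    simp only [Int.cast_zero, mul_zero, Complex.exp_zero] at this
    refine this.congr fun n => ?_
    rw [theta4]
    refine tsum_congr fun l => ?_
    rw [← Complex.exp_add]; congr 1; push_cast; ring
  · have := aux_lim τ hτ (fun l => 1) (fun l => 2 * l ^ 2 + l) (by simp) e2
      (((summable_C τ hτ).mul_left (Complex.exp (-((Real.pi : ℂ) * Complex.I * τ / 8)))).congr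
        fun l => by
        rw [one_mul, ← Complex.exp_add]; congr 1; push_cast; ring)
    refine this.congr fun n => ?_
    rw [auxC, ← tsum_mul_left]
    refine tsum_congr fun l => ?_
    rw [one_mul, ← Complex.exp_add]; congr 1; push_cast; ring
  · have hh : ∀ (σ : ℂ) (l : ℤ), (2 * (l : ℂ) + 1/2) *
        Complex.exp ((Real.pi : ℂ) * Complex.I * σ * ((2 * l ^ 2 + l : ℤ) : ℂ)) =
        Complex.exp (-((Real.pi : ℂ) * Complex.I * σ / 8)) * ((2 * (l : ℂ) + 1/2) *
        Complex.exp ((Real.pi : ℂ) * Complex.I * (σ / 2) * (2 * (l : ℂ) + 1/2)^2)) := by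
      intro σ l
      rw [mul_left_comm, ← Complex.exp_add]
      congr 2; push_cast; ring
    have := aux_lim τ hτ (fun l => 2 * (l : ℂ) + 1/2) (fun l => 2 * l ^ 2 + l) (by simp) e2
      (((summable_D τ hτ).mul_left (Complex.exp (-((Real.pi : ℂ) * Complex.I * τ / 8)))).congr
        fun l => (hh τ l).symm)
    simp only [Int.cast_zero, mul_zero, zero_add] at this
    refine this.congr fun n => ?_
    rw [auxD, ← tsum_mul_left]
    exact tsum_congr fun l => hh _ l
  · exact fun n => Complex.exp_ne_zero _

/-- Theta representation and Landen-type identity for S' (formula (n2)). -/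
theorem Sp_theta_representation (τ u : ℂ) (hτ : 0 < τ.im)
    (h1 : theta1 u τ * theta4 u τ ≠ 0)
    (h2 : theta1 u (τ / 2) ≠ 0) :
    zeta1 u τ - zeta4 u τ
        = (Real.pi : ℂ) * theta4 0 τ ^ 2 * (theta2 u τ * theta3 u τ)
            / (theta1 u τ * theta4 u τ)
    ∧ zeta1 u τ - zeta4 u τ
        = (Real.pi : ℂ) * theta3 0 (τ / 2) * theta4 0 (τ / 2)
            * theta2 u (τ / 2) / theta1 u (τ / 2) := by
  have W := theta_wronskian τ hτ u
  have P14 := theta14 τ hτ u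
  have P23 := theta23 τ hτ u
  have hD := auxD_eq τ hτ
  have h34 := theta34_half τ hτ
  have n1 : theta1 u τ ≠ 0 := left_ne_zero_of_mul h1
  have n4 : theta4 u τ ≠ 0 := right_ne_zero_of_mul h1
  have main : zeta1 u τ - zeta4 u τ
        = (Real.pi : ℂ) * theta4 0 τ ^ 2 * (theta2 u τ * theta3 u τ)
            / (theta1 u τ * theta4 u τ) := by
    unfold zeta1 zeta4
    rw [div_sub_div _ _ n1 n4, W, P23]
    congr 1
    linear_combination (Real.pi : ℂ) * theta2 u (τ / 2) * hD
  refine ⟨main, ?_⟩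
  have hC : auxC τ ≠ 0 := by
    rw [P14] at h1; exact left_ne_zero_of_mul h1
  rw [main, P14, P23, ← h34]
  field_simp
end
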